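/- arXiv:2101.09386 — 2 statements merged into one kernel-verified Lean document; each statement's English description precedes it below -/
import Mathlib

section
/- For every n ≥ 1 there exists a positive integer ℓ (depending only on n) such that for every field E of characteristic zero and every virtually solvable subgroup Δ of GL_n(E), one has 𝒟^{n+1}(Δ^{(ℓ)}) = {1}, i.e., the (n+1)-st term of the derived series of the subgroup of Δ generated by the ℓ-th powers of elements of Δ is trivial. -/
open Matrix

/-- A group is virtually solvable if it has a solvable subgroup of finite index. -/
def IsVirtuallySolvable (G : Type*) [Group G] : Prop :=
  ∃ H : Subgroup G, H.FiniteIndex ∧ IsSolvable ↥H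

universe u

/-!
After extending scalars to an algebraically closed field `K`, let a virtually solvable group `G`
act on `V` of dimension `d`. If the subgroup `H` generated by the `k`-th powers, for a suitable
`k = k(d)`, preserves a proper nonzero subspace, induction applies to `H` on the subspace and on
the quotient, and elements acting trivially on both commute with each other. Suppose instead that
`H` acts irreducibly.

* Every normal subgroup `A` acting by commuting maps acts by scalars: `G` permutes the at most `d`
  weight spaces of `A`, so the `d!`-th powers preserve each of them.
* Every normal subgroup `B` whose commutators act by scalars acts by scalars: each `b ∈ B` is a
  weight vector for the conjugation action of `B` on `End V`, so `⁅g, b⁆` commutes with `B` as soon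
  as `g` is a `(d²)!`-th power, hence is a scalar by the first point. It has determinant `1`, so
  `b` commutes with `g ^ d`, and Schur's lemma applies.
* Climbing the derived series, the solvable normal subgroup of finite index acts by scalars, so `G`
  acts on `End V` through a finite group. By Jordan's theorem on finite linear groups, bounded
  powers of elements of `G` commute on `End V`, that is, commute up to scalars on `V`, and a further
  `d`-th power makes them commute.

For Jordan's theorem, embed the field generated by the matrix entries into `ℂ` and choose a norm
invariant under the finite group. By compactness, a bounded power of every element lies at distance
less than `1/2` from the identity, and two such elements `u`, `v` commute: `⁅u, v⁆` is closer to the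
identity than `v`, so in a closest counterexample `u` commutes with `⁅u, v⁆`; then
`⁅u, v⁆ ^ k = ⁅u ^ k, v⁆` stays at distance less than `1` from the identity for all `k`, which
forces `⁅u, v⁆ = 1`.
-/

open scoped commutatorElement

lemma conj_pow_eq_of_commute_commutatorElement {G : Type*} [Group G] {g h : G}
    (hc : Commute g ⁅g, h⁆) (k : ℕ) : g ^ k * h * (g ^ k)⁻¹ = ⁅g, h⁆ ^ k * h := by
  induction k with
  | zero => simp
  | succ k ih =>
    calc g ^ (k + 1) * h * (g ^ (k + 1))⁻¹ = g * (g ^ k * h * (g ^ k)⁻¹) * g⁻¹ := by group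
      _ = g * ⁅g, h⁆ ^ k * h * g⁻¹ := by rw [ih]; group
      _ = ⁅g, h⁆ ^ k * (g * h * g⁻¹ * h⁻¹) * h := by rw [(hc.pow_right k).eq]; group
      _ = ⁅g, h⁆ ^ (k + 1) * h := by rw [pow_succ, commutatorElement_def]

lemma exists_norm_sub_lt_half {E : Type*} [NormedAddCommGroup E] [NormedSpace ℝ E]
    [FiniteDimensional ℝ E] (f : ℕ → E) (hf : ∀ i, ‖f i‖ ≤ 1) :
    ∃ i j, i < j ∧ j ≤ 5 ^ Module.finrank ℝ E ∧ ‖f j - f i‖ < 1 / 2 := by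
  classical
  by_contra! hsep
  set I := Finset.range (5 ^ Module.finrank ℝ E + 1)
  have separated : ∀ i ∈ I, ∀ j ∈ I, i ≠ j → 1 ≤ ‖(2 : ℝ) • f i - (2 : ℝ) • f j‖ := by
    intro i hi j hj hij
    rw [Finset.mem_range] at hi hj
    rw [← smul_sub, norm_smul, Real.norm_two]
    rcases hij.lt_or_gt with h | h
    · rw [norm_sub_rev]
      linarith [hsep i j h (by lia)]
    · linarith [hsep j i h (by lia)]
  have inj : Set.InjOn (fun i => (2 : ℝ) • f i) I := fun i hi j hj heq => by
    by_contra hij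
    have := separated i hi j hj hij
    rw [sub_eq_zero.mpr heq, norm_zero] at this
    linarith
  have card_le := Besicovitch.card_le_of_separated (I.image fun i => (2 : ℝ) • f i)
    (Finset.forall_mem_image.mpr fun i _ => by
      rw [norm_smul, Real.norm_two]
      linarith [hf i])
    (Finset.forall_mem_image.mpr fun i hi => Finset.forall_mem_image.mpr fun j hj hne =>
      separated i hi j hj fun h => hne (h ▸ rfl))
  rw [Finset.card_image_of_injOn inj, Finset.card_range] at card_le
  lia

section FiniteSubgroupsOfUnits

variable {R : Type*} [NormedRing R] {Γ : Subgroup Rˣ} {u v : Rˣ}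

lemma norm_mul_coe_le (hΓ : ∀ w ∈ Γ, ‖(w : R)‖ ≤ 1) (hu : u ∈ Γ) (x : R) : ‖x * u‖ ≤ ‖x‖ :=
  (norm_mul_le _ _).trans (mul_le_of_le_one_right (norm_nonneg _) (hΓ u hu))

lemma norm_coe_mul_le (hΓ : ∀ w ∈ Γ, ‖(w : R)‖ ≤ 1) (hu : u ∈ Γ) (x : R) : ‖u * x‖ ≤ ‖x‖ :=
  (norm_mul_le _ _).trans (mul_le_of_le_one_left (norm_nonneg _) (hΓ u hu))

lemma norm_inv_sub_one_le (hΓ : ∀ w ∈ Γ, ‖(w : R)‖ ≤ 1) (hu : u ∈ Γ) :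
    ‖((u⁻¹ : Rˣ) : R) - 1‖ ≤ ‖(u : R) - 1‖ := by
  have key : ((u⁻¹ : Rˣ) : R) - 1 = (u⁻¹ : Rˣ) * (1 - u) := by simp [mul_sub]
  rw [key, norm_sub_rev (u : R)]
  exact norm_coe_mul_le hΓ (inv_mem hu) _

lemma norm_conj_sub_one_le (hΓ : ∀ w ∈ Γ, ‖(w : R)‖ ≤ 1) (hu : u ∈ Γ) (v : Rˣ) :
    ‖((u * v * u⁻¹ : Rˣ) : R) - 1‖ ≤ ‖(v : R) - 1‖ := by
  have key : ((u * v * u⁻¹ : Rˣ) : R) - 1 = u * (v - 1) * (u⁻¹ : Rˣ) := by simp [mul_sub, sub_mul]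
  rw [key]
  exact (norm_mul_coe_le hΓ (inv_mem hu) _).trans (norm_coe_mul_le hΓ hu _)

lemma norm_commutatorElement_sub_one_le (hΓ : ∀ w ∈ Γ, ‖(w : R)‖ ≤ 1) (hu : u ∈ Γ) (hv : v ∈ Γ) :
    ‖((⁅u, v⁆ : Rˣ) : R) - 1‖ ≤ 2 * ‖(u : R) - 1‖ * ‖(v : R) - 1‖ := by
  have key : ((⁅u, v⁆ : Rˣ) : R) - 1
      = ((u - 1) * (v - 1) - (v - 1) * (u - 1)) * (u⁻¹ : Rˣ) * (v⁻¹ : Rˣ) := by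
    have : ((u : R) - 1) * (v - 1) - (v - 1) * (u - 1) = u * v - v * u := by noncomm_ring
    rw [this, commutatorElement_def]
    simp [sub_mul, mul_assoc]
  calc ‖((⁅u, v⁆ : Rˣ) : R) - 1‖
      ≤ ‖((u : R) - 1) * (v - 1) - (v - 1) * (u - 1)‖ := by
        rw [key]
        exact (norm_mul_coe_le hΓ (inv_mem hv) _).trans (norm_mul_coe_le hΓ (inv_mem hu) _)
    _ ≤ ‖(u : R) - 1‖ * ‖(v : R) - 1‖ + ‖(v : R) - 1‖ * ‖(u : R) - 1‖ :=
        (norm_sub_le _ _).trans (add_le_add (norm_mul_le _ _) (norm_mul_le _ _))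
    _ = 2 * ‖(u : R) - 1‖ * ‖(v : R) - 1‖ := by ring

variable [NormedAlgebra ℝ R]

-- The average of the powers of `x` is invertible, being close to `1`, and is killed by `x - 1`.
lemma eq_one_of_pow_eq_one_of_norm_pow_sub_one_lt [CompleteSpace R] {x : R} {m : ℕ} (hm : m ≠ 0)
    (hx : x ^ m = 1) (hlt : ∀ k : ℕ, ‖x ^ k - 1‖ < 1) : x = 1 := by
  set e : R := ∑ k ∈ Finset.range m, (m : ℝ)⁻¹ • x ^ k with he
  have e_mem_ball : e ∈ Metric.ball (1 : R) 1 := by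
    refine (convex_ball (1 : R) 1).sum_mem (fun _ _ => by positivity) ?_ fun k _ => ?_
    · simp [hm]
    · simpa [dist_eq_norm] using hlt k
  have e_isUnit : IsUnit e := by
    rw [← sub_sub_cancel 1 e]
    refine isUnit_one_sub_of_norm_lt_one ?_
    rwa [mem_ball_iff_norm'] at e_mem_ball
  have sub_mul_e : (x - 1) * e = 0 := by
    rw [he, ← Finset.smul_sum, mul_smul_comm, mul_geom_sum, hx, sub_self, smul_zero]
  exact sub_eq_zero.mp (e_isUnit.mul_left_eq_zero.mp sub_mul_e)

lemma commute_of_commute_commutatorElement [CompleteSpace R] [Finite Γ]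
    (hΓ : ∀ w ∈ Γ, ‖(w : R)‖ ≤ 1) (hu : u ∈ Γ) (hv : v ∈ Γ) (hlt : ‖(v : R) - 1‖ < 1 / 2)
    (hc : Commute u ⁅u, v⁆) : Commute u v := by
  set c : Rˣ := ⁅u, v⁆
  have c_mem : c ∈ Γ := mul_mem (mul_mem (mul_mem hu hv) (inv_mem hu)) (inv_mem hv)
  have norm_pow_lt (k : ℕ) : ‖(c : R) ^ k - 1‖ < 1 := by
    have c_pow : c ^ k = u ^ k * v * (u ^ k)⁻¹ * v⁻¹ :=
      eq_mul_inv_of_mul_eq (conj_pow_eq_of_commute_commutatorElement hc k).symm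
    have split : (c : R) ^ k - 1
        = (((u ^ k * v * (u ^ k)⁻¹ : Rˣ) : R) - 1) * (v⁻¹ : Rˣ) + (((v⁻¹ : Rˣ) : R) - 1) := by
      rw [← Units.val_pow_eq_pow_val, c_pow, Units.val_mul _ v⁻¹, sub_mul, one_mul,
        sub_add_sub_cancel]
    calc ‖(c : R) ^ k - 1‖ ≤ ‖(v : R) - 1‖ + ‖(v : R) - 1‖ := by
          rw [split]
          refine norm_add_le_of_le ?_ (norm_inv_sub_one_le hΓ hv)
          exact (norm_mul_coe_le hΓ (inv_mem hv) _).trans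
            (norm_conj_sub_one_le hΓ (pow_mem hu k) v)
      _ < 1 := by linarith
  obtain ⟨m, hm, c_pow_m⟩ := isOfFinOrder_iff_pow_eq_one.mp
    (Γ.isOfFinOrder_coe.mpr (isOfFinOrder_of_finite (⟨c, c_mem⟩ : Γ)))
  have c_eq_one : (c : R) = 1 := eq_one_of_pow_eq_one_of_norm_pow_sub_one_lt hm.ne'
    (by rw [← Units.val_pow_eq_pow_val]; exact congrArg Units.val c_pow_m) norm_pow_lt
  exact commutatorElement_eq_one_iff_commute.mp (Units.val_eq_one.mp c_eq_one)

lemma commute_of_norm_sub_one_lt [CompleteSpace R] [Finite Γ] (hΓ : ∀ w ∈ Γ, ‖(w : R)‖ ≤ 1)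
    (hu : u ∈ Γ) (hv : v ∈ Γ) (hu_lt : ‖(u : R) - 1‖ < 1 / 2) (hv_lt : ‖(v : R) - 1‖ < 1 / 2) :
    Commute u v := by
  by_contra hcomm
  obtain ⟨w, ⟨hw, hw_lt, hw_comm⟩, hmin⟩ := Set.Finite.exists_minimalFor
    (fun w : Rˣ => ‖(w : R) - 1‖) {w ∈ (Γ : Set Rˣ) | ‖(w : R) - 1‖ < 1 / 2 ∧ ¬ Commute u w}
    ((Set.toFinite (Γ : Set Rˣ)).subset (Set.sep_subset _ _)) ⟨v, hv, hv_lt, hcomm⟩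
  have w_pos : 0 < ‖(w : R) - 1‖ := by
    rw [norm_pos_iff, sub_ne_zero, Ne, Units.val_eq_one]
    rintro rfl
    exact hw_comm (Commute.one_right u)
  have closer : ‖((⁅u, w⁆ : Rˣ) : R) - 1‖ < ‖(w : R) - 1‖ :=
    (norm_commutatorElement_sub_one_le hΓ hu hw).trans_lt
      (mul_lt_of_lt_one_left w_pos (by linarith))
  have bracket_mem : ⁅u, w⁆ ∈ Γ := mul_mem (mul_mem (mul_mem hu hw) (inv_mem hu)) (inv_mem hw)
  have bracket_comm : Commute u ⁅u, w⁆ := by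
    by_contra h
    exact closer.not_ge (hmin ⟨bracket_mem, closer.trans hw_lt, h⟩ closer.le)
  exact hw_comm (commute_of_commute_commutatorElement hΓ hu hw hw_lt bracket_comm)

lemma exists_norm_pow_sub_one_lt [FiniteDimensional ℝ R] (hΓ : ∀ w ∈ Γ, ‖(w : R)‖ ≤ 1)
    (hu : u ∈ Γ) : ∃ k, 0 < k ∧ k ≤ 5 ^ Module.finrank ℝ R ∧ ‖((u ^ k : Rˣ) : R) - 1‖ < 1 / 2 := by
  obtain ⟨i, j, hij, hj, hclose⟩ := exists_norm_sub_lt_half (fun k => ((u ^ k : Rˣ) : R))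
    fun k => hΓ _ (pow_mem hu k)
  refine ⟨j - i, by lia, by lia, lt_of_le_of_lt ?_ hclose⟩
  have key : ((u ^ (j - i) : Rˣ) : R) - 1
      = (((u ^ i)⁻¹ : Rˣ) : R) * (((u ^ j : Rˣ) : R) - (u ^ i : Rˣ)) := by
    rw [mul_sub, ← Units.val_mul, Units.inv_mul, pow_sub u hij.le,
      ((Commute.refl u).pow_pow j i).inv_right.eq]
  rw [key]
  exact norm_coe_mul_le hΓ (inv_mem (pow_mem hu i)) _

lemma commute_pow_factorial [CompleteSpace R] [FiniteDimensional ℝ R] [Finite Γ]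
    (hΓ : ∀ w ∈ Γ, ‖(w : R)‖ ≤ 1) (hu : u ∈ Γ) (hv : v ∈ Γ) :
    Commute (u ^ Nat.factorial (5 ^ Module.finrank ℝ R))
      (v ^ Nat.factorial (5 ^ Module.finrank ℝ R)) := by
  obtain ⟨k, hk, hk_le, hk_lt⟩ := exists_norm_pow_sub_one_lt hΓ hu
  obtain ⟨l, hl, hl_le, hl_lt⟩ := exists_norm_pow_sub_one_lt hΓ hv
  obtain ⟨a, ha⟩ := Nat.dvd_factorial hk hk_le
  obtain ⟨b, hb⟩ := Nat.dvd_factorial hl hl_le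
  have comm := commute_of_norm_sub_one_lt hΓ (pow_mem hu k) (pow_mem hv l) hk_lt hl_lt
  nth_rw 1 [ha, hb]
  simpa only [pow_mul] using comm.pow_pow a b

end FiniteSubgroupsOfUnits

section Jordan

open Cardinal Module

/-- An explicit exponent for Jordan's theorem in degree `n`: the `jordanExponent n`-th powers of the
elements of a finite linear group of degree `n` in characteristic zero commute. -/
def jordanExponent (n : ℕ) : ℕ := Nat.factorial (5 ^ (2 * n ^ 2))

lemma nonempty_algHom_of_isTranscendenceBasis {k L M ι : Type*} [Field k] [Field L] [Field M]
    [IsAlgClosed M] [Algebra k L] [Algebra k M] {x : ι → L} {y : ι → M}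
    (hx : IsTranscendenceBasis k x) (hy : AlgebraicIndependent k y) : Nonempty (L →ₐ[k] M) := by
  let f : IntermediateField.adjoin k (Set.range x) →ₐ[k] M :=
    (IntermediateField.val _).comp (hy.aevalEquivField.toAlgHom.comp hx.1.reprField)
  let : Algebra (IntermediateField.adjoin k (Set.range x)) M := f.toAlgebra
  have : IsScalarTower k (IntermediateField.adjoin k (Set.range x)) M :=
    IsScalarTower.of_algebraMap_eq fun r => (f.commutes r).symm
  have := hx.isAlgebraic_field
  exact ⟨(IsAlgClosed.lift (R := IntermediateField.adjoin k (Set.range x))).restrictScalars k⟩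

lemma nonempty_ringHom_complex_of_mk_le_continuum {L : Type u} [Field L] [CharZero L]
    (hL : #L ≤ 𝔠) : Nonempty (L →+* ℂ) := by
  obtain ⟨s, hs⟩ := exists_isTranscendenceBasis ℚ L
  obtain ⟨t, ht⟩ := exists_isTranscendenceBasis ℚ ℂ
  have mk_t : #t = 𝔠 := by
    rw [← mk_complex]
    exact (IsAlgClosed.cardinal_eq_cardinal_transcendence_basis_of_aleph0_lt' _ ht
      mk_le_aleph0 (mk_complex ▸ aleph0_lt_continuum)).symm
  obtain ⟨i⟩ : Nonempty (s ↪ t) := by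
    rw [← lift_mk_le', mk_t, lift_continuum, lift_le_continuum]
    exact (mk_set_le s).trans hL
  obtain ⟨f⟩ := nonempty_algHom_of_isTranscendenceBasis hs (ht.1.comp i i.injective)
  exact ⟨f.toRingHom⟩

variable {F : Type*} [Group F] [Finite F]

lemma commute_pow_jordanExponent_of_norm_le {V : Type*} [NormedAddCommGroup V] [NormedSpace ℂ V]
    [FiniteDimensional ℂ V] (ρ : F →* End ℂ V) (hρ : ∀ g v, ‖ρ g v‖ ≤ ‖v‖) (g h : F) :
    Commute (ρ (g ^ jordanExponent (finrank ℂ V))) (ρ (h ^ jordanExponent (finrank ℂ V))) := by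
  let σ : F →* (V →L[ℂ] V)ˣ := ((End.toContinuousLinearMap V).toMonoidHom.comp ρ).toHomUnits
  let : NormedAlgebra ℝ (V →L[ℂ] V) := NormedAlgebra.restrictScalars ℝ ℂ _
  have : FiniteDimensional ℝ (V →L[ℂ] V) := FiniteDimensional.complexToReal _
  have finrank_eq : finrank ℝ (V →L[ℂ] V) = 2 * finrank ℂ V ^ 2 := by
    rw [finrank_real_of_complex, ← LinearMap.toContinuousLinearMap.finrank_eq,
      finrank_linearMap, sq]
  have norm_le : ∀ w ∈ σ.range, ‖(w : V →L[ℂ] V)‖ ≤ 1 := by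
    rintro _ ⟨x, rfl⟩
    exact ContinuousLinearMap.opNorm_le_bound _ zero_le_one fun v => by
      rw [one_mul]
      exact hρ x v
  have : Finite σ.range := Set.finite_range σ
  have comm := (commute_pow_factorial norm_le ⟨g, rfl⟩ ⟨h, rfl⟩).map (Units.coeHom _)
  rw [finrank_eq, ← map_pow, ← map_pow] at comm
  exact comm.map (End.toContinuousLinearMap V).symm

lemma commute_pow_jordanExponent_complex {V : Type*} [AddCommGroup V] [Module ℂ V]
    [FiniteDimensional ℂ V] (ρ : F →* End ℂ V) (g h : F) :
    Commute (ρ (g ^ jordanExponent (finrank ℂ V))) (ρ (h ^ jordanExponent (finrank ℂ V))) := by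
  cases nonempty_fintype F
  let orbitMap : V →ₗ[ℂ] F → Fin (finrank ℂ V) → ℂ :=
    LinearMap.pi fun x => (finBasis ℂ V).equivFun.toLinearMap ∘ₗ ρ x
  have orbitMap_injective : Function.Injective orbitMap := fun v w hvw => by
    simpa [orbitMap] using congrFun hvw 1
  let : NormedAddCommGroup V := NormedAddCommGroup.induced V _ orbitMap orbitMap_injective
  let : NormedSpace ℂ V := NormedSpace.induced ℂ V _ orbitMap
  refine commute_pow_jordanExponent_of_norm_le ρ (fun x v => ?_) g h
  refine (pi_norm_le_iff_of_nonneg (norm_nonneg v)).mpr fun y => ?_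
  have translate : orbitMap (ρ x v) y = orbitMap v (y * x) := by simp [orbitMap]
  rw [translate]
  exact norm_le_pi_norm (orbitMap v) (y * x)

lemma commute_matrix_pow_jordanExponent {K : Type*} [Field K] [CharZero K] {n : ℕ}
    (ρ : F →* Matrix (Fin n) (Fin n) K) (g h : F) :
    Commute (ρ (g ^ jordanExponent n)) (ρ (h ^ jordanExponent n)) := by
  let L := Subfield.closure (Set.range fun x : F × Fin n × Fin n => ρ x.1 x.2.1 x.2.2)
  have mk_L : #L ≤ 𝔠 := by
    refine (Subfield.cardinalMk_closure_le_max _).trans (max_le ?_ aleph0_le_continuum)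
    exact (Set.countable_range _).le_aleph0.trans aleph0_le_continuum
  obtain ⟨f⟩ := nonempty_ringHom_complex_of_mk_le_continuum mk_L
  have subtype_injective : Function.Injective (L.subtype.mapMatrix (m := Fin n)) :=
    Matrix.map_injective L.subtype_injective
  let r (x : F) : Matrix (Fin n) (Fin n) L :=
    Matrix.of fun i j => ⟨ρ x i j, Subfield.subset_closure ⟨(x, i, j), rfl⟩⟩
  have map_r (x : F) : L.subtype.mapMatrix (r x) = ρ x := rfl
  let ρL : F →* Matrix (Fin n) (Fin n) L :=
    { toFun := r
      map_one' := subtype_injective (by rw [map_r, map_one, map_one])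
      map_mul' := fun x y => subtype_injective (by rw [map_mul, map_r, map_r, map_r, map_mul]) }
  let ρC : F →* End ℂ (Fin n → ℂ) :=
    Matrix.toLinAlgEquiv'.toMonoidHom.comp (f.mapMatrix.toMonoidHom.comp ρL)
  have commC := commute_pow_jordanExponent_complex ρC g h
  rw [finrank_fin_fun] at commC
  have commL : Commute (ρL (g ^ jordanExponent n)) (ρL (h ^ jordanExponent n)) :=
    Commute.of_map (f := f.mapMatrix) (Matrix.map_injective f.injective)
      (commC.of_map Matrix.toLinAlgEquiv'.injective)
  exact commL.map L.subtype.mapMatrix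

lemma commute_pow_jordanExponent {K V : Type*} [Field K] [CharZero K] [AddCommGroup V] [Module K V]
    [FiniteDimensional K V] (ρ : F →* End K V) (g h : F) :
    Commute (ρ (g ^ jordanExponent (finrank K V))) (ρ (h ^ jordanExponent (finrank K V))) := by
  let e := LinearMap.toMatrixAlgEquiv (finBasis K V)
  exact (commute_matrix_pow_jordanExponent (e.toMonoidHom.comp ρ) g h).of_map e.injective

end Jordan

section GroupTheory

variable {G : Type*} [Group G]

lemma map_commutatorElement_eq_one_iff {M : Type*} [Monoid M] (f : G →* M) {g h : G} :
    f ⁅g, h⁆ = 1 ↔ Commute (f g) (f h) := by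
  have mul_eq : f ⁅g, h⁆ * f (h * g) = f (g * h) := by
    rw [← map_mul, commutatorElement_def]
    group
  rw [← ((Group.isUnit (h * g)).map f).mul_eq_right, mul_eq, map_mul, map_mul, commute_iff_eq]

lemma commutator_le_ker_of_forall_commute {M : Type*} [Monoid M] (f : G →* M) {H₁ H₂ : Subgroup G}
    (hcomm : ∀ g ∈ H₁, ∀ h ∈ H₂, Commute (f g) (f h)) : ⁅H₁, H₂⁆ ≤ f.ker :=
  Subgroup.commutator_le.mpr fun g hg h hh =>
    (map_commutatorElement_eq_one_iff f).mpr (hcomm g hg h hh)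

/-- The `m`-th term of the derived series of a subgroup `H`, as a subgroup of the ambient group. -/
def derivedSubgroup (H : Subgroup G) (m : ℕ) : Subgroup G := (derivedSeries H m).map H.subtype

@[simp]
lemma derivedSubgroup_zero (H : Subgroup G) : derivedSubgroup H 0 = H := by
  simp [derivedSubgroup, ← MonoidHom.range_eq_map]

lemma derivedSubgroup_succ (H : Subgroup G) (m : ℕ) :
    derivedSubgroup H (m + 1) = ⁅derivedSubgroup H m, derivedSubgroup H m⁆ := by
  rw [derivedSubgroup, derivedSeries_succ, Subgroup.map_commutator, derivedSubgroup]

lemma derivedSubgroup_eq_bot_iff {H : Subgroup G} {m : ℕ} :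
    derivedSubgroup H m = ⊥ ↔ derivedSeries H m = ⊥ :=
  Subgroup.map_eq_bot_iff_of_injective _ H.subtype_injective

lemma derivedSubgroup_antitone (H : Subgroup G) : Antitone (derivedSubgroup H) :=
  fun _ _ h => Subgroup.map_mono (derivedSeries_antitone H h)

lemma derivedSubgroup_mono {H₁ H₂ : Subgroup G} (h : H₁ ≤ H₂) (m : ℕ) :
    derivedSubgroup H₁ m ≤ derivedSubgroup H₂ m := by
  induction m with
  | zero => simpa
  | succ m ih => simpa only [derivedSubgroup_succ] using Subgroup.commutator_mono ih ih

lemma map_derivedSubgroup {G' : Type*} [Group G'] (f : G →* G') (H : Subgroup G) (m : ℕ) :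
    (derivedSubgroup H m).map f = derivedSubgroup (H.map f) m := by
  induction m with
  | zero => simp
  | succ m ih => rw [derivedSubgroup_succ, derivedSubgroup_succ, Subgroup.map_commutator, ih]

instance derivedSubgroup_normal (H : Subgroup G) [H.Normal] (m : ℕ) :
    (derivedSubgroup H m).Normal := by
  unfold derivedSubgroup
  infer_instance

variable (G) in
/-- The subgroup of `G` generated by the `m`-th powers of its elements, often denoted `G^{(m)}`. -/
def powerSubgroup (m : ℕ) : Subgroup G := Subgroup.closure (Set.range fun g : G => g ^ m)

lemma pow_mem_powerSubgroup (g : G) (m : ℕ) : g ^ m ∈ powerSubgroup G m :=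
  Subgroup.subset_closure ⟨g, rfl⟩

lemma powerSubgroup_induction {m : ℕ} {p : G → Prop} (pow : ∀ g, p (g ^ m))
    (mul : ∀ g h, p g → p h → p (g * h)) {g : G} (hg : g ∈ powerSubgroup G m) : p g := by
  induction hg using Subgroup.closure_induction'' with
  | mem _ hx => obtain ⟨x, rfl⟩ := hx; exact pow x
  | inv_mem _ hx => obtain ⟨x, rfl⟩ := hx; simpa only [inv_pow] using pow x⁻¹
  | one => simpa only [one_pow] using pow 1
  | mul x y _ _ hx hy => exact mul x y hx hy

lemma commutator_powerSubgroup_le_ker {M : Type*} [Monoid M] (f : G →* M) {m : ℕ}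
    (hcomm : ∀ g h, Commute (f (g ^ m)) (f (h ^ m))) :
    ⁅powerSubgroup G m, powerSubgroup G m⁆ ≤ f.ker := by
  refine commutator_le_ker_of_forall_commute f fun g hg h hh => ?_
  refine powerSubgroup_induction (p := fun g => Commute (f g) (f h)) (fun g => ?_)
    (fun a b ha hb => by rw [map_mul]; exact ha.mul_left hb) hg
  exact powerSubgroup_induction (p := fun h => Commute (f (g ^ m)) (f h)) (hcomm g)
    (fun a b ha hb => by rw [map_mul]; exact ha.mul_right hb) hh

lemma powerSubgroup_le_of_dvd {m n : ℕ} (h : m ∣ n) : powerSubgroup G n ≤ powerSubgroup G m := by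
  obtain ⟨k, rfl⟩ := h
  rw [powerSubgroup, Subgroup.closure_le]
  rintro _ ⟨g, rfl⟩
  simpa only [pow_mul, SetLike.mem_coe] using pow_mem (pow_mem_powerSubgroup g m) k

lemma powerSubgroup_mul_le_map (m n : ℕ) : powerSubgroup G (m * n) ≤
    (powerSubgroup (powerSubgroup G m) n).map (powerSubgroup G m).subtype := by
  rw [powerSubgroup, Subgroup.closure_le]
  rintro _ ⟨g, rfl⟩
  exact ⟨⟨g ^ m, pow_mem_powerSubgroup g m⟩ ^ n, pow_mem_powerSubgroup _ n, (pow_mul g m n).symm⟩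

namespace IsVirtuallySolvable

lemma subgroup (hG : IsVirtuallySolvable G) (H : Subgroup G) : IsVirtuallySolvable H := by
  obtain ⟨S, _, (_ : Group.IsSolvable S)⟩ := hG
  exact ⟨S.subgroupOf H, inferInstance, Group.isSolvable_of_isSolvable_injective
    (f := H.subtype.subgroupComap S) fun _ _ h =>
      Subtype.ext (Subtype.ext (congrArg (fun s : S => (s : G)) h))⟩

lemma exists_normal (hG : IsVirtuallySolvable G) :
    ∃ S : Subgroup G, S.Normal ∧ S.FiniteIndex ∧ Group.IsSolvable S := by
  obtain ⟨S, _, (_ : Group.IsSolvable S)⟩ := hG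
  exact ⟨S.normalCore, inferInstance, inferInstance,
    Group.isSolvable_of_isSolvable_injective (Subgroup.inclusion_injective S.normalCore_le)⟩

end IsVirtuallySolvable

end GroupTheory

section WeightSpaces

open Module

variable {K M ι : Type*} [Field K] [AddCommGroup M] [Module K M]

/-- The simultaneous eigenspace of a family of endomorphisms for the eigenvalues `χ`. -/
def weightSpace (f : ι → End K M) (χ : ι → K) : Submodule K M := ⨅ i, (f i).eigenspace (χ i)

lemma mem_weightSpace {f : ι → End K M} {χ : ι → K} {v : M} :
    v ∈ weightSpace f χ ↔ ∀ i, f i v = χ i • v := by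
  simp only [weightSpace, Submodule.mem_iInf, End.mem_eigenspace_iff]

lemma iSupIndep_weightSpace {f : ι → End K M} (hf : ∀ i j, Commute (f i) (f j)) :
    iSupIndep (weightSpace f) :=
  (End.independent_iInf_maxGenEigenspace_of_forall_mapsTo f fun i j μ =>
    End.mapsTo_maxGenEigenspace_of_comm (hf j i) μ).mono fun _ =>
      iInf_mono fun _ => (End.genEigenspace _ _).mono le_top

lemma exists_weightSpace_ne_bot [IsAlgClosed K] [FiniteDimensional K M] [Nontrivial M]
    {f : ι → End K M} (hf : ∀ i j, Commute (f i) (f j)) : ∃ χ, weightSpace f χ ≠ ⊥ := by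
  let A := Algebra.adjoin K (Set.range f)
  have : IsMulCommutative A :=
    Algebra.isMulCommutative_adjoin K (Set.forall_mem_range.mpr fun i =>
      Set.forall_mem_range.mpr fun j => hf i j)
  have : IsArtinian A M := isArtinian_of_tower K inferInstance
  obtain ⟨W, hW⟩ := IsAtomic.exists_atom (Submodule A M)
  have : IsSimpleModule A W := isSimpleModule_iff_isAtom.mpr hW
  have : FiniteDimensional K W :=
    FiniteDimensional.finiteDimensional_submodule (W.restrictScalars K)
  have finrank_W : finrank K (W.restrictScalars K) = 1 :=
    IsSimpleModule.finrank_eq_one_of_isMulCommutative A W K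
  obtain ⟨⟨v, hv⟩, v_ne, span_v⟩ := finrank_eq_one_iff'.mp finrank_W
  have eigen (i : ι) : ∃ c : K, c • v = f i v := by
    obtain ⟨c, hc⟩ := span_v ⟨f i v, W.smul_mem ⟨f i, Algebra.subset_adjoin ⟨i, rfl⟩⟩ hv⟩
    exact ⟨c, congrArg Subtype.val hc⟩
  choose χ hχ using eigen
  exact ⟨χ, (Submodule.ne_bot_iff _).mpr
    ⟨v, mem_weightSpace.mpr fun i => (hχ i).symm, fun h => v_ne (Subtype.ext h)⟩⟩

lemma mapsTo_pow_factorial_finrank [FiniteDimensional K M] {p : ι → Submodule K M}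
    (hp : iSupIndep p) {T : End K M} (hT : Function.Injective T) {τ : ι → ι}
    (hτ : Function.Injective τ) (hmaps : ∀ i, Set.MapsTo T (p i) (p (τ i))) (i : ι) :
    Set.MapsTo (T ^ (finrank K M).factorial) (p i) (p i) := by
  have mapsTo_pow (m : ℕ) : Set.MapsTo (T ^ m) (p i) (p (τ^[m] i)) := by
    induction m with
    | zero => exact fun v hv => hv
    | succ m ih =>
      rw [pow_succ', Function.iterate_succ_apply']
      exact (hmaps _).comp ih
  have τ_ne_bot {j : ι} (hj : p j ≠ ⊥) : p (τ j) ≠ ⊥ := by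
    obtain ⟨v, hv, v_ne⟩ := (p j).ne_bot_iff.mp hj
    exact (Submodule.ne_bot_iff _).mpr
      ⟨T v, hmaps j hv, fun h => v_ne (hT (h.trans T.map_zero.symm))⟩
  by_cases hi : p i = ⊥
  · rw [hi]
    rintro _ rfl
    exact map_zero _
  have : Fintype {j // p j ≠ ⊥} := hp.fintypeNeBotOfFiniteDimensional
  let τ' : {j // p j ≠ ⊥} → {j // p j ≠ ⊥} := Subtype.map τ fun _ => τ_ne_bot
  have τ'_injective : Function.Injective τ' := Subtype.map_injective _ hτ
  have periodic : τ'^[(finrank K M).factorial] ⟨i, hi⟩ = ⟨i, hi⟩ :=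
    (Function.isPeriodicPt_factorial_card_of_mem_periodicPts
      (τ'_injective.mem_periodicPts _)).trans_dvd
      (Nat.factorial_dvd_factorial hp.subtype_ne_bot_le_finrank)
  have τ_iterate : τ^[(finrank K M).factorial] i = i := by
    have semiconj : Function.Semiconj Subtype.val τ' τ := fun _ => rfl
    rw [← (semiconj.iterate_right _).eq ⟨i, hi⟩, periodic]
  simpa only [τ_iterate] using mapsTo_pow (finrank K M).factorial

variable {G : Type*} [Group G] {A : Subgroup G} [A.Normal]

lemma mapsTo_weightSpace_conj (σ : G →* End K M) (g : G) (χ : A → K) :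
    Set.MapsTo (σ g) (weightSpace (fun a : A => σ a) χ)
      (weightSpace (fun a : A => σ a) (χ ∘ MulAut.conjNormal g⁻¹)) := by
  intro v hv
  rw [SetLike.mem_coe, mem_weightSpace] at hv ⊢
  intro a
  have conj_mul : (a : G) * g = g * (MulAut.conjNormal g⁻¹ a : A) := by
    rw [MulAut.conjNormal_apply]
    group
  rw [← End.mul_apply, ← map_mul, conj_mul, map_mul, End.mul_apply, hv, map_smul,
    Function.comp_apply]

lemma mapsTo_weightSpace_pow_factorial_finrank [FiniteDimensional K M] (σ : G →* End K M)
    (hA : ∀ a b : A, Commute (σ a) (σ b)) (g : G) (χ : A → K) :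
    Set.MapsTo (σ (g ^ (finrank K M).factorial)) (weightSpace (fun a : A => σ a) χ)
      (weightSpace (fun a : A => σ a) χ) := by
  have injective_σ : Function.Injective (σ g) :=
    ((End.isUnit_iff _).mp ((Group.isUnit g).map σ)).injective
  rw [map_pow]
  exact mapsTo_pow_factorial_finrank (iSupIndep_weightSpace hA) injective_σ
    (MulAut.conjNormal g⁻¹).surjective.injective_comp_right (mapsTo_weightSpace_conj σ g) χ

end WeightSpaces

section IrreducibleRestriction

open Module Representation

variable {G K V : Type*} [Group G] [Field K] [AddCommGroup V] [Module K V]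
  (ρ : Representation K G V)

/-- The subgroup of elements acting on `V` by scalars, encoded as the kernel of the conjugation
action on `End V`. -/
def scalarSubgroup : Subgroup G := (linHom ρ ρ).ker

variable {ρ}

instance : (scalarSubgroup ρ).Normal := MonoidHom.normal_ker _

lemma linHom_self_apply_eq_smul_iff {g : G} {T : End K V} {c : K} :
    linHom ρ ρ g T = c • T ↔ ρ g * T = c • (T * ρ g) := by
  have inv_mul : ρ g⁻¹ * ρ g = 1 := by rw [← map_mul, inv_mul_cancel, map_one]
  have mul_inv : ρ g * ρ g⁻¹ = 1 := by rw [← map_mul, mul_inv_cancel, map_one]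
  change ρ g * (T * ρ g⁻¹) = c • T ↔ _
  refine ⟨fun h => ?_, fun h => ?_⟩
  · rw [← smul_mul_assoc, ← h, mul_assoc, mul_assoc, inv_mul, mul_one]
  · rw [← mul_assoc, h, smul_mul_assoc, mul_assoc, mul_inv, mul_one]

lemma linHom_self_apply_apply (g h : G) : linHom ρ ρ g (ρ h) = ρ ⁅g, h⁆ * ρ h := by
  rw [← map_mul, ← conj_eq_commutatorElement_mul, MulAut.conj_apply, map_mul, map_mul]
  rfl

lemma mem_scalarSubgroup_iff_commute {g : G} :
    g ∈ scalarSubgroup ρ ↔ ∀ T : End K V, Commute (ρ g) T := by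
  rw [scalarSubgroup, MonoidHom.mem_ker, LinearMap.ext_iff]
  exact forall_congr' fun T => by
    simpa only [one_smul, End.one_apply, commute_iff_eq] using
      linHom_self_apply_eq_smul_iff (ρ := ρ) (g := g) (T := T) (c := 1)

lemma mem_scalarSubgroup_iff {g : G} : g ∈ scalarSubgroup ρ ↔ ∃ c : K, ρ g = algebraMap K _ c := by
  rw [mem_scalarSubgroup_iff_commute, ← Algebra.IsCentral.mem_center_iff K,
    Subalgebra.mem_center_iff]
  exact forall_congr' fun T => eq_comm

lemma apply_pow_finrank_of_mem_scalarSubgroup {g : G} (hg : g ∈ scalarSubgroup ρ) :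
    ρ (g ^ finrank K V) = algebraMap K _ (LinearMap.det (ρ g)) := by
  obtain ⟨c, hc⟩ := mem_scalarSubgroup_iff.mp hg
  have det_eq : LinearMap.det (ρ g) = c ^ finrank K V := by
    rw [hc, Algebra.algebraMap_eq_smul_one, LinearMap.det_smul, map_one, mul_one]
  rw [map_pow, det_eq, hc, map_pow]

-- The commutator acts by a scalar of determinant one, hence by a `finrank K V`-th root of unity.
lemma commute_pow_finrank_of_commutatorElement_mem {g h : G} (hgh : ⁅g, h⁆ ∈ scalarSubgroup ρ) :
    Commute (ρ (g ^ finrank K V)) (ρ h) := by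
  have commute_units : Commute (ρ.toHomUnits g) ⁅ρ.toHomUnits g, ρ.toHomUnits h⁆ := by
    rw [← map_commutatorElement]
    exact Commute.units_of_val (mem_scalarSubgroup_iff_commute.mp hgh _).symm
  have det_eq_one : LinearMap.det (ρ ⁅g, h⁆) = 1 :=
    (map_commutatorElement_eq_one_iff (LinearMap.det.comp ρ)).mpr (Commute.all _ _)
  have pow_eq_one : ⁅ρ.toHomUnits g, ρ.toHomUnits h⁆ ^ finrank K V = 1 := by
    rw [← map_commutatorElement, ← map_pow, ← Units.val_inj]
    exact (apply_pow_finrank_of_mem_scalarSubgroup hgh).trans (by rw [det_eq_one, map_one]; rfl)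
  have conj_eq := conj_pow_eq_of_commute_commutatorElement commute_units (finrank K V)
  rw [pow_eq_one, one_mul, mul_inv_eq_iff_eq_mul, ← map_pow] at conj_eq
  exact congrArg Units.val conj_eq

lemma commute_commutatorElement_of_mem_weightSpace {B : Subgroup G} {χ : B → K} {b g : G}
    (hb : ρ b ∈ weightSpace (fun a : B => linHom ρ ρ a) χ)
    (hgb : linHom ρ ρ g (ρ b) ∈ weightSpace (fun a : B => linHom ρ ρ a) χ) {a : G} (ha : a ∈ B) :
    Commute (ρ ⁅g, b⁆) (ρ a) := by
  have swap_b := linHom_self_apply_eq_smul_iff.mp (mem_weightSpace.mp hb ⟨a, ha⟩)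
  have swap_gb := linHom_self_apply_eq_smul_iff.mp (mem_weightSpace.mp hgb ⟨a, ha⟩)
  rw [linHom_self_apply_apply] at swap_gb
  refine ((Group.isUnit b).map ρ).mul_right_cancel ?_
  rw [mul_assoc, swap_b, mul_smul_comm, ← mul_assoc, ← swap_gb, mul_assoc]

lemma eq_top_of_isIrreducible_restrict {m : ℕ}
    (hirr : IsIrreducible (ρ.comp (powerSubgroup G m).subtype)) {W : Submodule K V} (hW : W ≠ ⊥)
    (hinv : ∀ g, Set.MapsTo (ρ (g ^ m)) W W) : W = ⊤ := by
  let W' : Subrepresentation (ρ.comp (powerSubgroup G m).subtype) :=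
    { toSubmodule := W
      apply_mem_toSubmodule := fun g => powerSubgroup_induction (p := fun g => Set.MapsTo (ρ g) W W)
        hinv (fun g h hg hh => by rw [map_mul]; exact hg.comp hh) g.2 }
  rcases eq_bot_or_eq_top W' with h | h
  · exact absurd (congrArg Subrepresentation.toSubmodule h) hW
  · exact congrArg Subrepresentation.toSubmodule h

variable [IsAlgClosed K] [FiniteDimensional K V] {m : ℕ}

lemma mem_scalarSubgroup_of_forall_commute_pow
    (hirr : IsIrreducible (ρ.comp (powerSubgroup G m).subtype)) {g : G}
    (hg : ∀ h, Commute (ρ g) (ρ (h ^ m))) : g ∈ scalarSubgroup ρ := by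
  let f : IntertwiningMap (ρ.comp (powerSubgroup G m).subtype)
      (ρ.comp (powerSubgroup G m).subtype) :=
    { ρ g with
      isIntertwining' := fun h => powerSubgroup_induction (p := fun h => Commute (ρ g) (ρ h)) hg
        (fun a b ha hb => by rw [map_mul]; exact ha.mul_right hb) h.2 }
  obtain ⟨c, hc⟩ := (IsIrreducible.algebraMap_intertwiningMap_bijective_of_isAlgClosed).surjective f
  exact mem_scalarSubgroup_iff.mpr ⟨c, (congrArg IntertwiningMap.toLinearMap hc).symm⟩

lemma le_scalarSubgroup_of_forall_commute
    (hirr : IsIrreducible (ρ.comp (powerSubgroup G m).subtype)) (hm : (finrank K V).factorial ∣ m)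
    {A : Subgroup G} [A.Normal] (hA : ∀ a ∈ A, ∀ b ∈ A, Commute (ρ a) (ρ b)) :
    A ≤ scalarSubgroup ρ := by
  have : Nontrivial (Subrepresentation (ρ.comp (powerSubgroup G m).subtype)) := hirr.toNontrivial
  have : Nontrivial V := by
    rw [← Submodule.nontrivial_iff K]
    exact (Subrepresentation.toSubmodule_injective
      (ρ := ρ.comp (powerSubgroup G m).subtype)).nontrivial
  have hA' (a b : A) : Commute (ρ a) (ρ b) := hA a a.2 b b.2
  obtain ⟨χ, hχ⟩ := exists_weightSpace_ne_bot hA'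
  have weightSpace_eq_top := eq_top_of_isIrreducible_restrict hirr hχ fun g => by
    obtain ⟨k, rfl⟩ := hm
    rw [mul_comm, pow_mul]
    exact mapsTo_weightSpace_pow_factorial_finrank ρ hA' (g ^ k) χ
  refine fun a ha => mem_scalarSubgroup_iff.mpr ⟨χ ⟨a, ha⟩, LinearMap.ext fun v => ?_⟩
  exact mem_weightSpace.mp (weightSpace_eq_top ▸ Submodule.mem_top : v ∈ weightSpace _ χ) ⟨a, ha⟩

lemma mem_scalarSubgroup_of_mem_normal_of_forall_commute
    (hirr : IsIrreducible (ρ.comp (powerSubgroup G m).subtype)) (hm : (finrank K V).factorial ∣ m)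
    {B : Subgroup G} [hB : B.Normal] {z : G} (hz : z ∈ B) (hzB : ∀ b ∈ B, Commute (ρ z) (ρ b)) :
    z ∈ scalarSubgroup ρ := by
  let τ := ρ.toHomUnits.rangeRestrict
  have : (B.map τ).Normal := hB.map τ ρ.toHomUnits.rangeRestrict_surjective
  have mem_iff {a : G} : a ∈ (Subgroup.centralizer (B.map τ : Set ρ.toHomUnits.range)).comap τ ↔
      ∀ b ∈ B, Commute (ρ a) (ρ b) := by
    simp only [Subgroup.mem_comap, Subgroup.mem_centralizer_iff, Subgroup.coe_map,
      Set.forall_mem_image, SetLike.mem_coe]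
    refine forall₂_congr fun b _ => ?_
    rw [← Subtype.coe_inj, ← Units.val_inj, commute_iff_eq, eq_comm]
    rfl
  exact le_scalarSubgroup_of_forall_commute hirr hm
    (A := B ⊓ (Subgroup.centralizer (B.map τ : Set ρ.toHomUnits.range)).comap τ)
    (fun a ha b hb => mem_iff.mp ha.2 b hb.1) ⟨hz, mem_iff.mpr hzB⟩

lemma le_scalarSubgroup_of_commutator_le
    (hirr : IsIrreducible (ρ.comp (powerSubgroup G m).subtype))
    (hm : (finrank K V ^ 2).factorial * finrank K V ∣ m) {B : Subgroup G} [hB : B.Normal]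
    (hcomm : ⁅B, B⁆ ≤ scalarSubgroup ρ) : B ≤ scalarSubgroup ρ := by
  intro b hb
  have commute_linHom (a a' : B) : Commute (linHom ρ ρ a) (linHom ρ ρ a') :=
    (map_commutatorElement_eq_one_iff _).mp
      (hcomm (Subgroup.commutator_mem_commutator a.2 a'.2))
  have scalar (a : B) : ∃ c : K, ρ ⁅(a : G), b⁆ = algebraMap K _ c :=
    mem_scalarSubgroup_iff.mp (hcomm (Subgroup.commutator_mem_commutator a.2 hb))
  choose χ hχ using scalar
  have mem_weightSpace_χ : ρ b ∈ weightSpace (fun a : B => linHom ρ ρ a) χ :=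
    mem_weightSpace.mpr fun a => by
      rw [linHom_self_apply_apply, hχ, Algebra.algebraMap_eq_smul_one, smul_mul_assoc, one_mul]
  have factorial_dvd : (finrank K V).factorial ∣ m :=
    (Nat.factorial_dvd_factorial (Nat.le_self_pow two_ne_zero _)).trans
      ((Dvd.intro _ rfl).trans hm)
  refine mem_scalarSubgroup_of_forall_commute_pow hirr fun g => ?_
  obtain ⟨k, rfl⟩ := hm
  have commutator_mem : ⁅(g ^ k) ^ (finrank K V ^ 2).factorial, b⁆ ∈ scalarSubgroup ρ := by
    refine mem_scalarSubgroup_of_mem_normal_of_forall_commute hirr factorial_dvd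
      (Subgroup.commutator_le_right ⊤ B
        (Subgroup.commutator_mem_commutator (Subgroup.mem_top _) hb)) fun a ha => ?_
    refine commute_commutatorElement_of_mem_weightSpace mem_weightSpace_χ ?_ ha
    have := mapsTo_weightSpace_pow_factorial_finrank (linHom ρ ρ) commute_linHom (g ^ k) χ
      mem_weightSpace_χ
    rwa [finrank_linearMap, ← sq] at this
  have := commute_pow_finrank_of_commutatorElement_mem commutator_mem
  rw [← pow_mul, ← pow_mul, mul_comm k] at this
  exact this.symm

lemma le_scalarSubgroup_of_isSolvable
    (hirr : IsIrreducible (ρ.comp (powerSubgroup G m).subtype))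
    (hm : (finrank K V ^ 2).factorial * finrank K V ∣ m) {S : Subgroup G} [S.Normal]
    [hS : Group.IsSolvable S] : S ≤ scalarSubgroup ρ := by
  obtain ⟨k, hk⟩ := hS
  have le_of_derivedSubgroup_le (k : ℕ) (hk : derivedSubgroup S k ≤ scalarSubgroup ρ) :
      S ≤ scalarSubgroup ρ := by
    induction k with
    | zero => rwa [derivedSubgroup_zero] at hk
    | succ k ih =>
      rw [derivedSubgroup_succ] at hk
      exact ih (le_scalarSubgroup_of_commutator_le hirr hm hk)
  exact le_of_derivedSubgroup_le k ((derivedSubgroup_eq_bot_iff.mpr hk).trans_le bot_le)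

/-- The exponent `k` for which the `k`-th powers of a virtually solvable group commute in every
`d`-dimensional representation that is irreducible on them: Jordan's exponent for the conjugation
action on `End V`, times `d` to kill the scalar commutators that remain. -/
def irreducibleExponent (d : ℕ) : ℕ := jordanExponent (d ^ 2) * d

lemma factorial_mul_dvd_irreducibleExponent (d : ℕ) :
    (d ^ 2).factorial * d ∣ irreducibleExponent d := by
  refine Nat.mul_dvd_mul_right (Nat.factorial_dvd_factorial ?_) d
  calc d ^ 2 ≤ (d ^ 2) ^ 2 := Nat.le_self_pow two_ne_zero _
    _ ≤ 2 * (d ^ 2) ^ 2 := Nat.le_mul_of_pos_left _ two_pos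
    _ ≤ 5 ^ (2 * (d ^ 2) ^ 2) := (Nat.lt_pow_self (by norm_num)).le

lemma commute_pow_irreducibleExponent [CharZero K] (hG : IsVirtuallySolvable G)
    (hirr : IsIrreducible
      (ρ.comp (powerSubgroup G (irreducibleExponent (finrank K V))).subtype)) (g h : G) :
    Commute (ρ (g ^ irreducibleExponent (finrank K V)))
      (ρ (h ^ irreducibleExponent (finrank K V))) := by
  obtain ⟨S, _, _, _⟩ := hG.exists_normal
  have S_le : S ≤ scalarSubgroup ρ :=
    le_scalarSubgroup_of_isSolvable hirr (factorial_mul_dvd_irreducibleExponent _)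
  have : (scalarSubgroup ρ).FiniteIndex := Subgroup.finiteIndex_of_le S_le
  have commute_linHom := commute_pow_jordanExponent
    (QuotientGroup.lift (scalarSubgroup ρ) (linHom ρ ρ) le_rfl) g h
  rw [finrank_linearMap, ← sq] at commute_linHom
  have commutator_mem : ⁅g ^ jordanExponent (finrank K V ^ 2),
      h ^ jordanExponent (finrank K V ^ 2)⁆ ∈ scalarSubgroup ρ :=
    (map_commutatorElement_eq_one_iff _).mpr commute_linHom
  have := (commute_pow_finrank_of_commutatorElement_mem commutator_mem).pow_right (finrank K V)
  rwa [← map_pow, ← pow_mul, ← pow_mul] at this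

end IrreducibleRestriction

section Induction

open Module Representation

variable {G K : Type*} [Group G] [Field K]

lemma commute_of_mem_ker_subrepresentation_of_mem_ker_quotient {V : Type*} [AddCommGroup V]
    [Module K V] {ρ : Representation K G V} {W : Submodule K V} (hW : ∀ g, W ≤ W.comap (ρ g))
    {g h : G} (hg : g ∈ (ρ.subrepresentation W hW).ker ⊓ (ρ.quotient W hW).ker)
    (hh : h ∈ (ρ.subrepresentation W hW).ker ⊓ (ρ.quotient W hW).ker) :
    Commute (ρ g) (ρ h) := by
  have apply_eq {x : G} (hx : x ∈ (ρ.subrepresentation W hW).ker) {w : V} (hw : w ∈ W) :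
      ρ x w = w :=
    congrArg Subtype.val (LinearMap.congr_fun hx ⟨w, hw⟩)
  have apply_sub_mem {x : G} (hx : x ∈ (ρ.quotient W hW).ker) (v : V) : ρ x v - v ∈ W :=
    (Submodule.Quotient.eq W).mp (LinearMap.congr_fun hx (Submodule.Quotient.mk v))
  have sub_one_mul_sub_one {x y : G} (hx : x ∈ (ρ.subrepresentation W hW).ker)
      (hy : y ∈ (ρ.quotient W hW).ker) : (ρ x - 1) * (ρ y - 1) = 0 :=
    LinearMap.ext fun v => sub_eq_zero.mpr (apply_eq hx (apply_sub_mem hy v))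
  have commute_sub_one : Commute (ρ g - 1) (ρ h - 1) :=
    (sub_one_mul_sub_one hg.1 hh.2).trans (sub_one_mul_sub_one hh.1 hg.2).symm
  simpa only [sub_add_cancel] using
    (commute_sub_one.add_left (Commute.one_left _)).add_right (Commute.one_right _)

universe v

variable {V : Type v} [AddCommGroup V] [Module K V] [FiniteDimensional K V]

lemma derivedSubgroup_succ_le_ker_of_not_isIrreducible [Nontrivial V] {ρ : Representation K G V}
    (hρ : ¬ρ.IsIrreducible) (H : Subgroup G) {n : ℕ}
    (ih : ∀ (W : Type v) [AddCommGroup W] [Module K W] [FiniteDimensional K W],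
      finrank K W < finrank K V → ∀ σ : Representation K G W, derivedSubgroup H n ≤ σ.ker) :
    derivedSubgroup H (n + 1) ≤ ρ.ker := by
  obtain ⟨W, W_ne_bot, W_ne_top⟩ : ∃ W : Subrepresentation ρ, W ≠ ⊥ ∧ W ≠ ⊤ := by
    by_contra! hW
    have : Nontrivial (Subrepresentation ρ) :=
      ⟨⊥, ⊤, fun h => bot_ne_top (congrArg Subrepresentation.toSubmodule h)⟩
    exact hρ ⟨fun W => or_iff_not_imp_left.mpr (hW W)⟩
  have finrank_sub : finrank K W.toSubmodule < finrank K V :=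
    Submodule.finrank_lt fun h => W_ne_top (Subrepresentation.toSubmodule_injective h)
  have finrank_quotient : finrank K (V ⧸ W.toSubmodule) < finrank K V := by
    have sub_pos : 0 < finrank K W.toSubmodule := Nat.pos_of_ne_zero fun h =>
      W_ne_bot (Subrepresentation.toSubmodule_injective (Submodule.finrank_eq_zero.mp h))
    have := W.toSubmodule.finrank_quotient_add_finrank
    lia
  have le_ker := le_inf (ih _ finrank_sub (ρ.subrepresentation _ W.apply_mem_toSubmodule))
    (ih _ finrank_quotient (ρ.quotient _ W.apply_mem_toSubmodule))
  rw [derivedSubgroup_succ]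
  exact commutator_le_ker_of_forall_commute ρ fun g hg h hh =>
    commute_of_mem_ker_subrepresentation_of_mem_ker_quotient W.apply_mem_toSubmodule
      (le_ker hg) (le_ker hh)

/-- An exponent `ℓ` for which the subgroup generated by the `ℓ`-th powers of a virtually solvable
linear group of degree at most `n` is solvable of derived length at most `n`. -/
def powerExponent (n : ℕ) : ℕ := ∏ d ∈ Finset.range n, irreducibleExponent (d + 1)

lemma powerExponent_succ (n : ℕ) :
    powerExponent (n + 1) = irreducibleExponent (n + 1) * powerExponent n := by
  rw [powerExponent, Finset.prod_range_succ, mul_comm, powerExponent]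

lemma powerExponent_pos (n : ℕ) : 0 < powerExponent n :=
  Finset.prod_pos fun d _ => Nat.mul_pos (Nat.factorial_pos _) d.succ_pos

theorem derivedSubgroup_powerSubgroup_le_ker [CharZero K] [IsAlgClosed K]
    (hG : IsVirtuallySolvable G) (ρ : Representation K G V) {n : ℕ} (hn : finrank K V ≤ n) :
    derivedSubgroup (powerSubgroup G (powerExponent n)) n ≤ ρ.ker := by
  induction n generalizing G V with
  | zero =>
    have : Subsingleton V := finrank_zero_iff.mp (Nat.le_zero.mp hn)
    exact fun _ _ => Subsingleton.elim _ _
  | succ n ih =>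
    rw [powerExponent_succ]
    rcases hn.lt_or_eq with finrank_lt | finrank_eq
    · calc derivedSubgroup (powerSubgroup G (irreducibleExponent (n + 1) * powerExponent n)) (n + 1)
          ≤ derivedSubgroup (powerSubgroup G (powerExponent n)) n :=
            (derivedSubgroup_antitone _ n.le_succ).trans
              (derivedSubgroup_mono (powerSubgroup_le_of_dvd (Nat.dvd_mul_left _ _)) n)
        _ ≤ ρ.ker := ih hG ρ (Nat.lt_succ_iff.mp finrank_lt)
    have : Nontrivial V := nontrivial_of_finrank_eq_succ finrank_eq
    set H := powerSubgroup G (irreducibleExponent (n + 1)) with hH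
    by_cases hirr : IsIrreducible (ρ.comp H.subtype)
    · rw [hH, ← finrank_eq] at hirr
      have commutator_le := commutator_powerSubgroup_le_ker ρ
        (commute_pow_irreducibleExponent hG hirr)
      rw [finrank_eq, ← hH] at commutator_le
      calc derivedSubgroup (powerSubgroup G (irreducibleExponent (n + 1) * powerExponent n)) (n + 1)
          ≤ derivedSubgroup H 1 := (derivedSubgroup_antitone _ (Nat.le_add_left 1 n)).trans
            (derivedSubgroup_mono (powerSubgroup_le_of_dvd (Nat.dvd_mul_right _ _)) 1)
        _ = ⁅H, H⁆ := by rw [derivedSubgroup_succ, derivedSubgroup_zero]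
        _ ≤ ρ.ker := commutator_le
    · calc derivedSubgroup (powerSubgroup G (irreducibleExponent (n + 1) * powerExponent n)) (n + 1)
          ≤ derivedSubgroup ((powerSubgroup H (powerExponent n)).map H.subtype) (n + 1) :=
            derivedSubgroup_mono (powerSubgroup_mul_le_map _ _) _
        _ = (derivedSubgroup (powerSubgroup H (powerExponent n)) (n + 1)).map H.subtype :=
            (map_derivedSubgroup _ _ _).symm
        _ ≤ ρ.ker := Subgroup.map_le_iff_le_comap.mpr <|
            derivedSubgroup_succ_le_ker_of_not_isIrreducible hirr _ fun W _ _ _ finrank_lt σ =>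
              ih (hG.subgroup H) σ (Nat.lt_succ_iff.mp (finrank_lt.trans_le hn))

end Induction

section GeneralLinearGroup

variable {E : Type*} [Field E] {n : ℕ}

lemma map_subtype_powerSubgroup {G : Type*} [Group G] (Δ : Subgroup G) (m : ℕ) :
    (powerSubgroup Δ m).map Δ.subtype = Subgroup.closure {y : G | ∃ x ∈ Δ, y = x ^ m} := by
  rw [powerSubgroup, MonoidHom.map_closure, ← Set.range_comp]
  congr 1
  ext y
  simp [eq_comm]

/-- The standard representation of `GL_n(E)`, with scalars extended to an algebraic closure
of `E`. -/
noncomputable def standardRepresentation (n : ℕ) (E : Type*) [Field E] :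
    Representation (AlgebraicClosure E) (GL (Fin n) E) (Fin n → AlgebraicClosure E) :=
  ((Matrix.toLinAlgEquiv' : Matrix (Fin n) (Fin n) (AlgebraicClosure E) ≃ₐ[_] _) : _ →* _).comp
    ((algebraMap E (AlgebraicClosure E)).mapMatrix.toMonoidHom.comp (Units.coeHom _))

lemma standardRepresentation_injective : Function.Injective (standardRepresentation n E) :=
  fun _ _ h => Units.ext (Matrix.map_injective (algebraMap E _).injective
    (Matrix.toLinAlgEquiv'.injective h))

theorem stmt_4_general [CharZero E] {Δ : Subgroup (GL (Fin n) E)} (hΔ : IsVirtuallySolvable Δ) :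
    derivedSeries (Subgroup.closure {y : GL (Fin n) E | ∃ x ∈ Δ, y = x ^ powerExponent n}) n
      = ⊥ := by
  let ρ := (standardRepresentation n E).comp Δ.subtype
  have ker_eq_bot : ρ.ker = ⊥ := (MonoidHom.ker_eq_bot_iff ρ).mpr
    (standardRepresentation_injective.comp Δ.subtype_injective)
  have le_bot : derivedSubgroup (powerSubgroup Δ (powerExponent n)) n ≤ ⊥ :=
    (derivedSubgroup_powerSubgroup_le_ker hΔ ρ (by simp)).trans_eq ker_eq_bot
  rw [← derivedSubgroup_eq_bot_iff, ← map_subtype_powerSubgroup, ← map_derivedSubgroup,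
    le_bot_iff.mp le_bot, Subgroup.map_bot]

end GeneralLinearGroup

/-- For every `n ≥ 1` there is a positive integer `ℓ` depending only on `n` such that for every
field `E` of characteristic zero and every virtually solvable subgroup `Δ ⊂ GL_n(E)`, the
`(n+1)`-st term of the derived series of the subgroup generated by the `ℓ`-th powers of
elements of `Δ` is trivial. -/
theorem stmt_4 (n : ℕ) (hn : 1 ≤ n) :
    ∃ ℓ : ℕ, 0 < ℓ ∧
      ∀ (E : Type u) [Field E] [CharZero E] (Δ : Subgroup (GL (Fin n) E)),
        IsVirtuallySolvable ↥Δ →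
        derivedSeries ↥(Subgroup.closure {y : GL (Fin n) E | ∃ x ∈ Δ, y = x ^ ℓ}) (n + 1)
          = ⊥ := by
  refine ⟨powerExponent n, powerExponent_pos n, fun E _ _ Δ hΔ => le_bot_iff.mp ?_⟩
  exact (derivedSeries_antitone _ n.le_succ).trans_eq (stmt_4_general hΔ)
end

section
/- Let K be a field, n ≥ 1, and let Γ be a finitely generated subgroup of GL_n(K). Then every commutative subgroup Δ of Γ all of whose elements are semi-simple is finitely generated. -/
open Matrix

/-- An element of `GL n K` is semi-simple if the corresponding linear endomorphism
of `K^n` is a semisimple endomorphism. -/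
def IsSemisimpleElt {n : ℕ} {K : Type*} [Field K] (g : GL (Fin n) K) : Prop :=
  Module.End.IsSemisimple ((g : Matrix (Fin n) (Fin n) K).mulVecLin)

/-!
Let `R ⊆ K` be the ring generated by the entries of generators of `Γ` and of their inverses. As
`Δ` is commutative, `A = R[Δ]` is a commutative ring of finite type over `ℤ`, and as the identity
is the only element of `Δ` that is both semi-simple and unipotent, `Δ` injects into the units of
the reduced ring `A / nilradical A`. It remains to see that the unit group of a reduced ring of
finite type over `ℤ` is finitely generated (Samuel, Roquette). The reduced case follows from that of
domains by embedding the ring in the product of its quotients by the minimal primes.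

For domains one adjoins one generator at a time, starting from `ℤ` (Dirichlet's unit theorem) or
from a prime field. Suppose `B` is algebraic over `D[x]`, where `D ⊆ B`. The units of `B` have
poles and zeros at only finitely many places of the function field `Frac B` over `Frac D`, so their
orders there map them to a finitely generated group, and the kernel consists of units algebraic
over `D`. Choose a prime `P` of `B` such that `B / P` contains `D` and is algebraic over it: the
elements of `B` algebraic over `D` inject into `B / P`, whose unit group is already known to be
finitely generated.
-/

section Groups

theorem group_fg_iff_module_finite (G : Type*) [CommGroup G] :
    Group.FG G ↔ Module.Finite ℤ (Additive G) :=
  GroupFG.iff_add_fg.trans Module.Finite.iff_addGroup_fg.symm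

theorem group_fg_subgroup {G : Type*} [CommGroup G] [hG : Group.FG G] (H : Subgroup G) :
    Group.FG H := by
  rw [group_fg_iff_module_finite] at hG ⊢
  exact Module.Finite.of_injective (MonoidHom.toAdditive H.subtype).toIntLinearMap
    H.subtype_injective

theorem group_fg_of_injective {G H : Type*} [Group G] [CommGroup H] [Group.FG H] (f : G →* H)
    (hf : Function.Injective f) : Group.FG G := by
  have : Group.FG f.range := group_fg_subgroup f.range
  exact Group.fg_of_surjective (f := (f.ofInjective hf).symm.toMonoidHom)
    (f.ofInjective hf).symm.surjective

theorem group_fg_of_ker {G H : Type*} [CommGroup G] [CommGroup H] [hH : Group.FG H]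
    (f : G →* H) (hf : Group.FG f.ker) : Group.FG G := by
  rw [group_fg_iff_module_finite] at hH hf ⊢
  let i : Additive f.ker →ₗ[ℤ] Additive G := (MonoidHom.toAdditive f.ker.subtype).toIntLinearMap
  let g : Additive G →ₗ[ℤ] Additive H := (MonoidHom.toAdditive f).toIntLinearMap
  have exact_i_g : Function.Exact i g.rangeRestrict := fun x =>
    ⟨fun hx => ⟨Additive.ofMul ⟨x.toMul, congrArg Subtype.val hx⟩, rfl⟩,
      fun ⟨y, hy⟩ => Subtype.ext (hy ▸ y.toMul.2)⟩
  exact Module.Finite.of_exact exact_i_g g.surjective_rangeRestrict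

end Groups

section Valuations

open WithZero IsDedekindDomain

theorem isIntegral_map_of_adjoin {A L M : Type*} [CommRing A] [CommRing L] [Algebra A L]
    [CommRing M] (φ : L →+* M) (S : Subring M) {T : Set L}
    (hA : ∀ a, φ (algebraMap A L a) ∈ S) (hT : ∀ t ∈ T, φ t ∈ S) {u : L}
    (hu : IsIntegral (Algebra.adjoin A T) u) : IsIntegral S (φ u) := by
  have hS : ∀ r : Algebra.adjoin A T, φ r ∈ S := by
    rintro ⟨r, hr⟩
    induction hr using Algebra.adjoin_induction with
    | mem t ht => exact hT t ht
    | algebraMap a => exact hA a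
    | add x y _ _ hx hy => exact map_add φ x y ▸ add_mem hx hy
    | mul x y _ _ hx hy => exact map_mul φ x y ▸ mul_mem hx hy
  exact hu.map_of_comp_eq ((φ.comp (algebraMap _ L)).codRestrict S hS) φ rfl

theorem mem_valuationSubring_of_isIntegral_adjoin {A L M : Type*} [CommRing A] [CommRing L]
    [Algebra A L] [Field M] (φ : L →+* M) (W : ValuationSubring M) {T : Set L}
    (hA : ∀ a, φ (algebraMap A L a) ∈ W) (hT : ∀ t ∈ T, φ t ∈ W) {u : L}
    (hu : IsIntegral (Algebra.adjoin A T) u) : φ u ∈ W := by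
  have isIntegral_W : IsIntegral W (φ u) := isIntegral_map_of_adjoin φ W.toSubring hA hT hu
  obtain ⟨y, hy⟩ := IsIntegrallyClosed.isIntegral_iff.1 isIntegral_W
  exact hy ▸ y.2

/-- The elements of `L` integral over a finitely generated extension of `R` inside `L` have poles
at only finitely many discrete places of `L` that are finite over `R`: for every finite `T` there
are finitely many `ℤᵐ⁰`-valued valuations which decide whether an element integral over `R[T]` is
integral over `R`. -/
def FinitelyManyPoles (R L : Type*) [CommRing R] [Field L] [Algebra R L] : Prop :=
  ∀ T : Set L, T.Finite → ∃ V : Set (Valuation L ℤᵐ⁰), V.Finite ∧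
    ∀ u, IsIntegral (Algebra.adjoin R T) u → (∀ v ∈ V, v u ≤ 1) → IsIntegral R u

namespace FinitelyManyPoles

theorem of_isSeparable (A K L : Type*) [CommRing A] [IsDedekindDomain A] [Field K] [Algebra A K]
    [IsFractionRing A K] [Field L] [Algebra K L] [Algebra A L] [IsScalarTower A K L]
    [FiniteDimensional K L] [Algebra.IsSeparable K L] : FinitelyManyPoles A L := by
  intro T hT
  let O := integralClosure A L
  have : IsDedekindDomain O := integralClosure.isDedekindDomain A K L
  have : IsFractionRing O L := integralClosure.isFractionRing_of_finite_extension K L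
  let poles : Set (HeightOneSpectrum O) := ⋃ t ∈ T, HeightOneSpectrum.Support O t
  have poles_finite : poles.Finite := hT.biUnion fun t _ => HeightOneSpectrum.Support.finite O t
  refine ⟨(fun P => P.valuation L) '' poles, poles_finite.image _, fun u hu hpoles => ?_⟩
  have valuation_le_one (P : HeightOneSpectrum O) : P.valuation L u ≤ 1 := by
    by_cases hP : P ∈ poles
    · exact hpoles _ ⟨P, hP, rfl⟩
    · refine mem_valuationSubring_of_isIntegral_adjoin (RingHom.id L)
        (P.valuation L).valuationSubring (fun a => ?_) (fun t ht => ?_) hu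
      · exact P.valuation_le_one (algebraMap A O a)
      · exact le_of_not_gt fun hlt : 1 < P.valuation L t => hP (Set.mem_biUnion ht hlt)
  obtain ⟨y, rfl⟩ := HeightOneSpectrum.mem_integers_of_valuation_le_one L u valuation_le_one
  exact y.2

/-- A power of Frobenius maps `L` into `M`, and an element of `L` is integral over `A` exactly when
its image is; so the poles of `L` can be read off in `M`. -/
theorem of_isPurelyInseparable (A M L : Type*) [CommRing A] [Field M] [Field L] [Algebra A M]
    [Algebra M L] [Algebra A L] [IsScalarTower A M L] [IsPurelyInseparable M L]
    [IsPurelyInseparable.HasExponent M L]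
    (h : FinitelyManyPoles A M) : FinitelyManyPoles A L := by
  intro T hT
  obtain ⟨p, hp⟩ := ExpChar.exists M
  let q := p ^ IsPurelyInseparable.exponent M L
  let φ : L →+* M := IsPurelyInseparable.iterateFrobenius M L p le_rfl
  have algebraMap_φ (a : L) : algebraMap M L (φ a) = a ^ q :=
    IsPurelyInseparable.algebraMap_iterateFrobenius M p le_rfl a
  have φ_algebraMap (a : A) : φ (algebraMap A L a) = algebraMap A M (a ^ q) :=
    (algebraMap M L).injective <| by
      rw [algebraMap_φ, ← IsScalarTower.algebraMap_apply, map_pow]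
  obtain ⟨V, hV, hVint⟩ := h (φ '' T) (hT.image φ)
  refine ⟨(fun v => v.comap φ) '' V, hV.image _, fun u hu hu_le => ?_⟩
  have isIntegral_adjoin : IsIntegral (Algebra.adjoin A (φ '' T)) (φ u) :=
    isIntegral_map_of_adjoin φ (Algebra.adjoin A (φ '' T)).toSubring
      (fun a => φ_algebraMap a ▸ Subalgebra.algebraMap_mem _ _)
      (fun t ht => Algebra.subset_adjoin ⟨t, ht, rfl⟩) hu
  have isIntegral_φ : IsIntegral A (φ u) :=
    hVint _ isIntegral_adjoin fun v hv => hu_le _ ⟨v, hv, rfl⟩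
  have isIntegral_pow : IsIntegral A (u ^ q) :=
    algebraMap_φ u ▸ isIntegral_φ.map (IsScalarTower.toAlgHom A M L)
  exact isIntegral_pow.of_pow (expChar_pow_pos M p _)

theorem of_finiteDimensional (A K L : Type*) [CommRing A] [IsDedekindDomain A] [Field K]
    [Algebra A K] [IsFractionRing A K] [Field L] [Algebra K L] [Algebra A L] [IsScalarTower A K L]
    [FiniteDimensional K L] : FinitelyManyPoles A L :=
  have : IsScalarTower A (separableClosure K L) L := .of_algebraMap_eq fun _ => rfl
  of_isPurelyInseparable A (separableClosure K L) L (of_isSeparable A K (separableClosure K L))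

end FinitelyManyPoles

theorem isIntegral_of_adjoin_singleton_inv {F L : Type*} [Field F] [Field L] [Algebra F L]
    {x u : L} (hu : IsIntegral (Algebra.adjoin F {x}) u)
    (hu' : IsIntegral (Algebra.adjoin F {x⁻¹}) u) : IsIntegral F u := by
  by_contra h
  obtain ⟨W, hW, huW⟩ := Subring.exists_le_valuationSubring_of_isIntegrallyClosedIn
    (R := (integralClosure F L).toSubring) (x := u) h
  have mem_of_mem {y : L} (hy : y ∈ W) (hyu : IsIntegral (Algebra.adjoin F {y}) u) : u ∈ W :=
    mem_valuationSubring_of_isIntegral_adjoin (RingHom.id L) W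
      (fun a => hW (isIntegral_algebraMap : IsIntegral F (algebraMap F L a)))
      (fun _ ht => Set.mem_singleton_iff.1 ht ▸ hy) hyu
  exact (W.mem_or_inv_mem x).elim (fun hx => huW (mem_of_mem hx hu))
    fun hx => huW (mem_of_mem hx hu')

open Polynomial in
theorem isDedekindDomain_adjoin_singleton (F : Type*) {L : Type*} [Field F] [Field L] [Algebra F L]
    (x : L) : IsDedekindDomain (Algebra.adjoin F {x}) := by
  let f : F[X] →ₐ[F] Algebra.adjoin F {x} :=
    (aeval x).codRestrict _ fun _ => aeval_mem_adjoin_singleton F x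
  have f_surjective : Function.Surjective f := by
    rintro ⟨y, hy⟩
    obtain ⟨p, rfl⟩ := Algebra.adjoin_singleton_eq_range_aeval F x ▸ hy
    exact ⟨p, rfl⟩
  have : IsPrincipalIdealRing (Algebra.adjoin F {x}) := .of_surjective f f_surjective
  infer_instance

open scoped IntermediateField.algebraAdjoinAdjoin in
open IntermediateField in
theorem FinitelyManyPoles.of_isAlgebraic_adjoin_simple {F L : Type*} [Field F] [Field L]
    [Algebra F L] [Algebra.EssFiniteType F L] (x : L) [Algebra.IsAlgebraic F⟮x⟯ L] :
    FinitelyManyPoles F L := by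
  have overAdjoin (y : L) (hy : F⟮y⟯ = F⟮x⟯) : FinitelyManyPoles (Algebra.adjoin F {y}) L := by
    have : Algebra.IsAlgebraic F⟮y⟯ L := hy ▸ inferInstance
    have : Algebra.EssFiniteType F⟮y⟯ L := .of_comp F _ _
    have : FiniteDimensional F⟮y⟯ L := Algebra.finite_of_essFiniteType_of_isAlgebraic
    have : IsDedekindDomain (Algebra.adjoin F {y}) := isDedekindDomain_adjoin_singleton F y
    exact of_finiteDimensional _ F⟮y⟯ L
  have adjoin_inv : F⟮x⁻¹⟯ = F⟮x⟯ := le_antisymm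
    (adjoin_simple_le_iff.2 (inv_mem (mem_adjoin_simple_self F x)))
    (adjoin_simple_le_iff.2 (inv_mem_iff.1 (mem_adjoin_simple_self F x⁻¹)))
  intro T hT
  obtain ⟨V, hV, hVint⟩ := overAdjoin x rfl T hT
  -- The poles above `x = ∞` are invisible over `F[x]`: they are those of `x` itself over `F[x⁻¹]`.
  obtain ⟨V', hV', hVint'⟩ := overAdjoin x⁻¹ adjoin_inv {x} (Set.finite_singleton x)
  refine ⟨V ∪ V', hV.union hV', fun u hu hle => ?_⟩
  have hx : IsIntegral (Algebra.adjoin F {x}) u :=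
    hVint u (isIntegral_map_of_adjoin (RingHom.id L)
      (Algebra.adjoin (Algebra.adjoin F {x}) T).toSubring
      (fun a => Subalgebra.algebraMap_mem _ (algebraMap F (Algebra.adjoin F {x}) a))
      (fun t ht => Algebra.subset_adjoin ht) hu) fun v hv => hle v (.inl hv)
  refine isIntegral_of_adjoin_singleton_inv hx (hVint' u ?_ fun v hv => hle v (.inr hv))
  exact isIntegral_map_of_adjoin (RingHom.id L)
    (Algebra.adjoin (Algebra.adjoin F {x⁻¹}) {x}).toSubring
    (fun a => Subalgebra.algebraMap_mem _ (algebraMap F (Algebra.adjoin F {x⁻¹}) a))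
    (fun t ht => Algebra.subset_adjoin ht) hx

end Valuations

section UnitGroups

open WithZero

theorem exists_finite_algebraMap_mem_adjoin (D R B L : Type*) [CommRing D] [CommRing R]
    [CommRing B] [CommRing L] [Algebra D R] [Algebra D B] [Algebra R L] [Algebra D L] [Algebra B L]
    [IsScalarTower D R L] [IsScalarTower D B L] [Algebra.FiniteType D B] :
    ∃ T : Set L, T.Finite ∧ ∀ b : B, algebraMap B L b ∈ Algebra.adjoin R T := by
  obtain ⟨s, hs⟩ := Algebra.FiniteType.out (R := D) (A := B)
  let f : B →ₐ[D] L := IsScalarTower.toAlgHom D B L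
  refine ⟨f '' s, s.finite_toSet.image f, fun b => ?_⟩
  have map_le : (Algebra.adjoin D (s : Set B)).map f ≤
      (Algebra.adjoin R (f '' s)).restrictScalars D := by
    rw [AlgHom.map_adjoin]
    exact Algebra.adjoin_le Algebra.subset_adjoin
  exact map_le ⟨b, hs ▸ Algebra.mem_top, rfl⟩

theorem FinitelyManyPoles.units_fg {D R B L : Type*} [CommRing D] [CommRing R]
    [CommRing B] [Field L] [Algebra D R] [Algebra D B] [Algebra R L] [Algebra D L] [Algebra B L]
    [IsScalarTower D R L] [IsScalarTower D B L] [Algebra.FiniteType D B]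
    (h : FinitelyManyPoles R L) (C : Subalgebra D B) [Group.FG Cˣ]
    (hC : ∀ b, IsIntegral R (algebraMap B L b) → b ∈ C) : Group.FG Bˣ := by
  obtain ⟨T, hT, hBT⟩ := exists_finite_algebraMap_mem_adjoin D R B L
  obtain ⟨V, hV, hVint⟩ := h T hT
  have : Finite V := hV
  have : Group.FG ℤᵐ⁰ˣ :=
    group_fg_of_injective (WithZero.unitsWithZeroEquiv (α := Multiplicative ℤ)).toMonoidHom
      (MulEquiv.injective _)
  let ord : Bˣ →* (V → ℤᵐ⁰ˣ) := MonoidHom.pi fun v =>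
    Units.map ((v.1 : L →* ℤᵐ⁰).comp (algebraMap B L : B →* L))
  have mem_C (u : ord.ker) : (u.1 : B) ∈ C :=
    hC _ <| hVint _ (isIntegral_algebraMap (x := (⟨_, hBT u.1⟩ : Algebra.adjoin R T))) fun v hv =>
      (congrArg Units.val (congrFun u.2 ⟨v, hv⟩)).le
  let toC : ord.ker →* Cˣ :=
    (((Units.coeHom B).comp ord.ker.subtype).codRestrict C mem_C).toHomUnits
  exact group_fg_of_ker ord <| group_fg_of_injective toC fun u w huw =>
    Subtype.ext <| Units.ext <| congrArg (fun c : Cˣ => (c : B)) huw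

/-- Every domain which contains `D`, and is algebraic and of finite type over `D`, has a finitely
generated unit group. This is the property of `D` that passes from `D` to `D[x]`, also for `x`
transcendental over `D`. -/
def UnitsFGOver.{u, v} (D : Type v) [CommRing D] : Prop :=
  ∀ (B : Type u) [CommRing B] [IsDomain B] [Algebra D B] [FaithfulSMul D B]
    [Algebra.FiniteType D B] [Algebra.IsAlgebraic D B], Group.FG Bˣ

open TensorProduct in
/-- `P` is a closed point of the generic fibre of `Spec B → Spec D`. -/
theorem exists_isPrime_faithfulSMul_isAlgebraic_quotient (D B : Type*) [CommRing D] [IsDomain D]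
    [CommRing B] [Algebra D B] [FaithfulSMul D B] [Algebra.FiniteType D B] :
    ∃ P : Ideal B, P.IsPrime ∧ FaithfulSMul D (B ⧸ P) ∧ Algebra.IsAlgebraic D (B ⧸ P) := by
  let F := FractionRing D
  have : Nontrivial (F ⊗[D] B) := (Algebra.TensorProduct.includeLeft_injective (S := D) (A := F)
    (FaithfulSMul.algebraMap_injective D B)).nontrivial
  obtain ⟨m, hm⟩ := Ideal.exists_maximal (F ⊗[D] B)
  let κ := (F ⊗[D] B) ⧸ m
  let _ : Field κ := Ideal.Quotient.field m
  have : Module.Finite F κ := finite_of_finite_type_of_isJacobsonRing F κ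
  have : Algebra.IsAlgebraic D κ :=
    (IsFractionRing.comap_isAlgebraic_iff (K := F)).2 (Algebra.IsAlgebraic.of_finite F κ)
  have algebraMap_injective : Function.Injective (algebraMap D κ) := by
    rw [IsScalarTower.algebraMap_eq D F κ]
    exact (algebraMap F κ).injective.comp (IsFractionRing.injective D F)
  let π : B →ₐ[D] κ := (Ideal.Quotient.mkₐ D m).comp Algebra.TensorProduct.includeRight
  refine ⟨RingHom.ker π, RingHom.ker_isPrime π, ?_,
    .of_injective (Ideal.kerLiftAlg π) (Ideal.kerLiftAlg_injective π)⟩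
  rw [faithfulSMul_iff_algebraMap_injective]
  refine .of_comp (f := Ideal.kerLiftAlg π) ?_
  convert algebraMap_injective
  exact funext (Ideal.kerLiftAlg π).commutes

namespace UnitsFGOver

theorem units_algebraicClosure_fg.{u, v} {D : Type v} [CommRing D] [IsDomain D]
    (hD : UnitsFGOver.{u} D) (B : Type u) [CommRing B] [IsDomain B] [Algebra D B]
    [FaithfulSMul D B] [Algebra.FiniteType D B] :
    Group.FG (Subalgebra.algebraicClosure D B)ˣ := by
  obtain ⟨P, hP, _, _⟩ := exists_isPrime_faithfulSMul_isAlgebraic_quotient D B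
  have : Group.FG (B ⧸ P)ˣ := hD (B ⧸ P)
  let f : Subalgebra.algebraicClosure D B →+* B ⧸ P :=
    (Ideal.Quotient.mk P).comp (Subalgebra.algebraicClosure D B).val.toRingHom
  have comap_P : P.comap (algebraMap D B) = ⊥ := by
    rw [← Ideal.mk_ker (I := P), RingHom.comap_ker]
    exact (RingHom.injective_iff_ker_eq_bot _).1 (FaithfulSMul.algebraMap_injective D (B ⧸ P))
  have f_injective : Function.Injective f := by
    refine (injective_iff_map_eq_zero f).2 fun x hx => ?_
    by_contra hx0
    exact Ideal.comap_ne_bot_of_algebraic_mem (fun h => hx0 (Subtype.ext h))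
      (Ideal.Quotient.eq_zero_iff_mem.1 hx) x.2 comap_P
  exact group_fg_of_injective (Units.map (f : _ →* B ⧸ P)) (Units.map_injective f_injective)

end UnitsFGOver

open IntermediateField in
theorem isAlgebraic_intermediateField_adjoin_simple {D E : Type*} (F : Type*) {L : Type*}
    [CommRing D] [CommRing E] [Field F] [Field L] [Algebra D E] [Algebra D F] [Algebra D L]
    [Algebra E L] [Algebra F L] [IsScalarTower D E L] [IsScalarTower D F L] [FaithfulSMul E L]
    [Algebra.IsAlgebraic E L] {x : E} (hx : Algebra.adjoin D {x} = ⊤) :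
    Algebra.IsAlgebraic F⟮algebraMap E L x⟯ L := by
  let K := F⟮algebraMap E L x⟯
  let i : E →ₐ[D] L := IsScalarTower.toAlgHom D E L
  have range_le : i.range ≤ K.toSubalgebra.restrictScalars D := by
    rw [← Algebra.map_top, ← hx, AlgHom.map_adjoin_singleton]
    exact Algebra.adjoin_le (Set.singleton_subset_iff.2 (mem_adjoin_simple_self F _))
  let f : E →+* K :=
    (i.codRestrict (K.toSubalgebra.restrictScalars D) fun e => range_le ⟨e, rfl⟩).toRingHom
  have f_injective : Function.Injective f := fun a b hab =>
    FaithfulSMul.algebraMap_injective E L (congrArg Subtype.val hab)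
  exact .ringHom_of_comp_eq f (RingHom.id L) f_injective Function.surjective_id rfl

namespace UnitsFGOver

theorem of_adjoin_eq_top.{u, v, w} {D : Type v} [CommRing D] [IsDomain D]
    (hD : UnitsFGOver.{u} D) {E : Type w} [CommRing E] [Algebra D E] [FaithfulSMul D E]
    {x : E} (hx : Algebra.adjoin D {x} = ⊤) : UnitsFGOver.{u} E := by
  intro B _ _ _ _ _ _
  let L := FractionRing B
  let F := FractionRing D
  let _ : Algebra D B := Algebra.compHom B (algebraMap D E)
  have : IsScalarTower D E B := .of_algebraMap_eq fun _ => rfl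
  have : FaithfulSMul D B := .trans D E B
  let _ : Algebra F L := FractionRing.liftAlgebra D L
  have : Algebra.FiniteType D E := ⟨⟨{x}, by simpa using hx⟩⟩
  have : Algebra.FiniteType D B := .trans ‹_› ‹Algebra.FiniteType E B›
  have : Algebra.EssFiniteType F L := .of_comp D F L
  have : Algebra.IsAlgebraic B L := IsLocalization.isAlgebraic L (nonZeroDivisors B)
  have : Algebra.IsAlgebraic E L := Algebra.IsAlgebraic.trans E B L
  have : Algebra.IsAlgebraic (IntermediateField.adjoin F {algebraMap E L x}) L :=
    isAlgebraic_intermediateField_adjoin_simple F hx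
  have : Group.FG (Subalgebra.algebraicClosure D B)ˣ := hD.units_algebraicClosure_fg B
  refine (FinitelyManyPoles.of_isAlgebraic_adjoin_simple (F := F) (algebraMap E L x)).units_fg
    (Subalgebra.algebraicClosure D B) fun b hb => ?_
  have isAlgebraic_L : IsAlgebraic D (algebraMap B L b) :=
    (IsFractionRing.isAlgebraic_iff D F L).2 hb.isAlgebraic
  exact (isAlgebraic_algebraMap_iff (FaithfulSMul.algebraMap_injective B L)).1 isAlgebraic_L

theorem adjoin_finset.{u, v, w} {k : Type v} [CommRing k] [IsDomain k] (hk : UnitsFGOver.{u} k)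
    {B : Type w} [CommRing B] [IsDomain B] [Algebra k B] [FaithfulSMul k B] (s : Finset B) :
    UnitsFGOver.{u} (Algebra.adjoin k (s : Set B)) := by
  classical
  induction s using Finset.induction_on with
  | empty =>
    refine hk.of_adjoin_eq_top (x := 0) (Algebra.eq_top_iff.2 fun ⟨y, hy⟩ => ?_)
    rw [Finset.coe_empty, Algebra.adjoin_empty] at hy
    obtain ⟨r, rfl⟩ := Algebra.mem_bot.1 hy
    exact Subalgebra.algebraMap_mem _ r
  | insert x s _ ih =>
    let A := Algebra.adjoin k (s : Set B)
    let A' := Algebra.adjoin k ((insert x s : Finset B) : Set B)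
    have A_le_A' : A ≤ A' := Algebra.adjoin_mono (Finset.coe_subset.2 (Finset.subset_insert x s))
    let _ : Algebra A A' := (Subalgebra.inclusion A_le_A').toAlgebra
    have : FaithfulSMul A A' := (faithfulSMul_iff_algebraMap_injective _ _).2
      (Subalgebra.inclusion_injective A_le_A')
    let x' : A' := ⟨x, Algebra.subset_adjoin (Finset.mem_insert_self x s)⟩
    refine ih.of_adjoin_eq_top (x := x') (Algebra.eq_top_iff.2 fun ⟨y, hy⟩ => ?_)
    induction hy using Algebra.adjoin_induction with
    | mem y hy =>
      rcases Finset.mem_insert.1 hy with rfl | hys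
      · exact Algebra.self_mem_adjoin_singleton A x'
      · exact Subalgebra.algebraMap_mem _ (⟨y, Algebra.subset_adjoin hys⟩ : A)
    | algebraMap r => exact Subalgebra.algebraMap_mem _ (algebraMap k A r)
    | add y z _ _ hy hz => exact add_mem hy hz
    | mul y z _ _ hy hz => exact mul_mem hy hz

theorem units_fg_of_finiteType.{u, v} {k : Type v} [CommRing k] [IsDomain k]
    (hk : UnitsFGOver.{u} k) (B : Type u) [CommRing B] [IsDomain B] [Algebra k B]
    [FaithfulSMul k B] [Algebra.FiniteType k B] : Group.FG Bˣ := by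
  obtain ⟨s, hs⟩ := Algebra.FiniteType.out (R := k) (A := B)
  have algebraMap_surjective :
      Function.Surjective (algebraMap (Algebra.adjoin k (s : Set B)) B) := fun b =>
    ⟨⟨b, hs ▸ Algebra.mem_top⟩, rfl⟩
  have : Algebra.FiniteType (Algebra.adjoin k (s : Set B)) B :=
    .of_surjective (Algebra.ofId _ B) algebraMap_surjective
  have : Algebra.IsAlgebraic (Algebra.adjoin k (s : Set B)) B :=
    ⟨algebraMap_surjective.forall.2 isAlgebraic_algebraMap⟩
  exact hk.adjoin_finset s B

end UnitsFGOver

end UnitGroups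

section FiniteTypeOverInt

open NumberField

theorem unitsFGOver_zmod (p : ℕ) [Fact p.Prime] : UnitsFGOver (ZMod p) := by
  intro B _ _ _ _ _ _
  have : Module.Finite (ZMod p) B := Algebra.IsIntegral.finite
  have : Finite B := Module.finite_of_finite (ZMod p)
  infer_instance

theorem numberField_of_isFractionRing (B L : Type*) [CommRing B] [Field L] [Algebra B L]
    [IsFractionRing B L] [CharZero B] [Algebra.FiniteType ℤ B] [Algebra.IsAlgebraic ℤ B] :
    NumberField L := by
  have : IsDomain B := (IsFractionRing.injective B L).isDomain (algebraMap B L)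
  have : CharZero L := charZero_of_injective_algebraMap (IsFractionRing.injective B L)
  have : Algebra.EssFiniteType B L := .of_isLocalization _ (nonZeroDivisors B)
  have : Algebra.EssFiniteType ℤ L := .comp ℤ B L
  have : Algebra.EssFiniteType ℚ L := .of_comp ℤ ℚ L
  have : Algebra.IsAlgebraic B L := IsLocalization.isAlgebraic L (nonZeroDivisors B)
  have : Algebra.IsAlgebraic ℚ L :=
    (IsFractionRing.comap_isAlgebraic_iff (A := ℤ)).1 (Algebra.IsAlgebraic.trans ℤ B L)
  exact { to_finiteDimensional := Algebra.finite_of_essFiniteType_of_isAlgebraic }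

theorem units_fg_of_numberField (B L : Type*) [CommRing B] [Algebra.FiniteType ℤ B] [Field L]
    [NumberField L] [Algebra B L] [FaithfulSMul B L] : Group.FG Bˣ := by
  have algebraMap_injective := FaithfulSMul.algebraMap_injective B L
  have : Group.FG (𝓞 L)ˣ := Group.fg_iff_monoid_fg.2 inferInstance
  let toRingOfIntegers : integralClosure ℤ B →* 𝓞 L :=
    RingOfIntegers.restrict_monoidHom
      ((algebraMap B L).comp (integralClosure ℤ B).val.toRingHom).toMonoidHom
      fun b => b.2.algebraMap
  have toRingOfIntegers_injective : Function.Injective toRingOfIntegers := fun a b hab =>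
    Subtype.ext (algebraMap_injective (congrArg RingOfIntegers.val hab))
  have : Group.FG (integralClosure ℤ B)ˣ :=
    group_fg_of_injective (Units.map toRingOfIntegers)
      (Units.map_injective toRingOfIntegers_injective)
  exact (FinitelyManyPoles.of_finiteDimensional ℤ ℚ L).units_fg (integralClosure ℤ B) fun b hb =>
    (isIntegral_algebraMap_iff algebraMap_injective).1 hb

theorem unitsFGOver_int : UnitsFGOver ℤ := by
  intro B _ _ algInt _ _ _
  obtain rfl : algInt = Ring.toIntAlgebra B := Subsingleton.elim _ _
  have : CharZero B := charZero_of_injective_algebraMap (FaithfulSMul.algebraMap_injective ℤ B)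
  have : NumberField (FractionRing B) := numberField_of_isFractionRing B (FractionRing B)
  exact units_fg_of_numberField B (FractionRing B)

theorem units_fg_of_isDomain (B : Type*) [CommRing B] [IsDomain B] [Algebra.FiniteType ℤ B] :
    Group.FG Bˣ := by
  obtain ⟨p, _⟩ := CharP.exists B
  rcases CharP.char_is_prime_or_zero B p with hp | rfl
  · have : Fact p.Prime := ⟨hp⟩
    let _ : Algebra (ZMod p) B := ZMod.algebra B p
    have : Algebra.FiniteType (ZMod p) B := .of_restrictScalars_finiteType ℤ _ B
    exact (unitsFGOver_zmod p).units_fg_of_finiteType B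
  · have : CharZero B := CharP.charP_to_charZero B
    exact unitsFGOver_int.units_fg_of_finiteType B

theorem units_fg_of_isReduced (B : Type*) [CommRing B] [IsReduced B] [Algebra.FiniteType ℤ B] :
    Group.FG Bˣ := by
  have : IsNoetherianRing B := Algebra.FiniteType.isNoetherianRing ℤ B
  have : Finite (minimalPrimes B) := minimalPrimes.finite_of_isNoetherianRing B
  have (P : minimalPrimes B) : Group.FG (B ⧸ P.1)ˣ := by
    have : P.1.IsPrime := P.2.1.1
    have : @Algebra.FiniteType ℤ (B ⧸ P.1) _ _ (Ring.toIntAlgebra _) :=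
      .of_surjective (Ideal.Quotient.mk P.1).toIntAlgHom Ideal.Quotient.mk_surjective
    exact units_fg_of_isDomain (B ⧸ P.1)
  let f : B →+* ∀ P : minimalPrimes B, B ⧸ P.1 := RingHom.pi fun P => Ideal.Quotient.mk P.1
  have f_injective : Function.Injective f := by
    refine (injective_iff_map_eq_zero f).2 fun b hb => ?_
    have mem_nilradical : b ∈ nilradical B := by
      rw [nilradical, Ideal.zero_eq_bot, ← Ideal.sInf_minimalPrimes, Submodule.mem_sInf]
      exact fun P hP => Ideal.Quotient.eq_zero_iff_mem.1 (congrFun hb ⟨P, hP⟩)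
    rwa [nilradical_eq_zero] at mem_nilradical
  let g : Bˣ →* ∀ P : minimalPrimes B, (B ⧸ P.1)ˣ :=
    MonoidHom.pi fun P => Units.map (Ideal.Quotient.mk P.1 : B →* B ⧸ P.1)
  exact group_fg_of_injective g fun u w huw => Units.ext <| f_injective <| funext fun P =>
    congrArg Units.val (congrFun huw P)

end FiniteTypeOverInt

section LinearGroups

open scoped IsMulCommutative in
theorem subgroup_units_fg (R : Type*) {S : Type*} [CommRing R] [Algebra.FiniteType ℤ R] [Ring S]
    [Algebra R S] [Module.Finite R S] (Δ : Subgroup Sˣ) (hcomm : ∀ x ∈ Δ, ∀ y ∈ Δ, x * y = y * x)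
    (hnil : ∀ g ∈ Δ, IsNilpotent ((g : S) - 1) → g = 1) : Group.FG Δ := by
  have : IsNoetherianRing R := Algebra.FiniteType.isNoetherianRing ℤ R
  let A := Algebra.adjoin R (Units.val '' (Δ : Set Sˣ))
  have : IsMulCommutative A := Algebra.isMulCommutative_adjoin R (by
    rintro _ ⟨a, ha, rfl⟩ _ ⟨b, hb, rfl⟩
    exact congrArg Units.val (hcomm a ha b hb))
  have : Module.Finite R A := inferInstanceAs (Module.Finite R A.toSubmodule)
  have : Algebra.FiniteType ℤ A := .trans (S := R) ‹_› inferInstance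
  let Ared := A ⧸ nilradical A
  have : @Algebra.FiniteType ℤ Ared _ _ (Ring.toIntAlgebra _) :=
    .of_surjective (Ideal.Quotient.mk (nilradical A)).toIntAlgHom Ideal.Quotient.mk_surjective
  have : IsReduced Ared :=
    (Ideal.isRadical_iff_quotient_reduced _).1 (Ideal.radical_isRadical _)
  have : Group.FG Aredˣ := units_fg_of_isReduced Ared
  let toA : Δ →* A :=
    ((Units.coeHom S).comp Δ.subtype).codRestrict A.toSubmonoid fun g =>
      Algebra.subset_adjoin ⟨g, g.2, rfl⟩
  let f : Δ →* Aredˣ := ((Ideal.Quotient.mk (nilradical A) : A →* Ared).comp toA).toHomUnits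
  refine group_fg_of_injective f <| (injective_iff_map_eq_one f).2 fun g hg => ?_
  have mk_eq : Ideal.Quotient.mk (nilradical A) (toA g) = Ideal.Quotient.mk _ 1 :=
    congrArg Units.val hg
  have isNilpotent : IsNilpotent (toA g - 1) := Ideal.Quotient.eq.1 mk_eq
  exact Subtype.ext (hnil g g.2 (isNilpotent.map A.val))

theorem exists_subalgebra_fg_le_range_map {K ι : Type*} [CommRing K] [Fintype ι] [DecidableEq ι]
    (Γ : Subgroup (GL ι K)) (hΓ : Group.FG Γ) :
    ∃ R : Subalgebra ℤ K, R.FG ∧ Γ ≤ (GeneralLinearGroup.map (n := ι) R.val.toRingHom).range := by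
  obtain ⟨S, rfl⟩ := (Group.fg_iff_subgroup_fg Γ).1 hΓ
  let entries (g : GL ι K) : Set K :=
    (Set.range fun ij : ι × ι => g.1 ij.1 ij.2) ∪ Set.range fun ij : ι × ι => g⁻¹.1 ij.1 ij.2
  let E : Set K := ⋃ g ∈ S, entries g
  have E_finite : E.Finite := S.finite_toSet.biUnion fun g _ =>
    (Set.finite_range _).union (Set.finite_range _)
  refine ⟨Algebra.adjoin ℤ E, ⟨E_finite.toFinset, by simp⟩,
    (Subgroup.closure_le _).2 fun g hg => ?_⟩
  have mem (i j : ι) : g.1 i j ∈ Algebra.adjoin ℤ E :=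
    Algebra.subset_adjoin (Set.mem_biUnion hg (.inl ⟨(i, j), rfl⟩))
  have inv_mem (i j : ι) : g⁻¹.1 i j ∈ Algebra.adjoin ℤ E :=
    Algebra.subset_adjoin (Set.mem_biUnion hg (.inr ⟨(i, j), rfl⟩))
  let h : Matrix ι ι (Algebra.adjoin ℤ E) := .of fun i j => ⟨g.1 i j, mem i j⟩
  let h' : Matrix ι ι (Algebra.adjoin ℤ E) := .of fun i j => ⟨g⁻¹.1 i j, inv_mem i j⟩
  let toK : Matrix ι ι (Algebra.adjoin ℤ E) →+* Matrix ι ι K :=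
    (Algebra.adjoin ℤ E).val.toRingHom.mapMatrix
  have toK_injective : Function.Injective toK := Matrix.map_injective Subtype.val_injective
  have mul_h' : h * h' = 1 := toK_injective <| by rw [map_mul, map_one]; exact g.mul_inv
  have h'_mul : h' * h = 1 := toK_injective <| by rw [map_mul, map_one]; exact g.inv_mul
  exact ⟨⟨h, h', mul_h', h'_mul⟩, Units.ext rfl⟩

theorem IsSemisimpleElt.eq_one_of_isNilpotent_sub_one {K : Type*} [Field K] {n : ℕ}
    {g : GL (Fin n) K} (hg : IsSemisimpleElt g)
    (hnil : IsNilpotent ((g : Matrix (Fin n) (Fin n) K) - 1)) : g = 1 := by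
  let f : Module.End K (Fin n → K) := Matrix.toLinAlgEquiv' g.1
  have f_sub_one : f - algebraMap K _ 1 = Matrix.toLinAlgEquiv' (g.1 - 1) := by
    rw [map_sub, map_one, map_one]
  have f_sub_one_eq_zero : f - algebraMap K _ 1 = 0 :=
    Module.End.eq_zero_of_isNilpotent_isSemisimple (f_sub_one ▸ hnil.map Matrix.toLinAlgEquiv')
      (Module.End.isSemisimple_sub_algebraMap_iff.2 hg)
  rw [f_sub_one, map_eq_zero_iff _ Matrix.toLinAlgEquiv'.injective, sub_eq_zero]
    at f_sub_one_eq_zero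
  exact Units.ext f_sub_one_eq_zero

theorem stmt_12_general {K ι : Type*} [CommRing K] [Fintype ι] [DecidableEq ι]
    (Γ : Subgroup (GL ι K)) (hΓ : Group.FG Γ) (Δ : Subgroup (GL ι K)) (hle : Δ ≤ Γ)
    (hcomm : ∀ x ∈ Δ, ∀ y ∈ Δ, x * y = y * x)
    (hnil : ∀ g ∈ Δ, IsNilpotent ((g : Matrix ι ι K) - 1) → g = 1) : Group.FG Δ := by
  obtain ⟨R, hR, hΓR⟩ := exists_subalgebra_fg_le_range_map Γ hΓ
  have : Algebra.FiniteType ℤ R := R.fg_iff_finiteType.1 hR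
  let f : GL ι R →* GL ι K := GeneralLinearGroup.map R.val.toRingHom
  have f_injective : Function.Injective f :=
    Units.map_injective (Matrix.map_injective Subtype.val_injective)
  have : Group.FG (Δ.comap f) := subgroup_units_fg R (Δ.comap f)
    (fun x hx y hy => f_injective (by simpa only [map_mul] using hcomm _ hx _ hy))
    fun g hg hgnil => f_injective <| by
      rw [map_one]
      refine hnil (f g) hg ?_
      have := hgnil.map (R.val.toRingHom.mapMatrix : Matrix ι ι R →+* Matrix ι ι K)
      rwa [map_sub, map_one] at this
  refine Group.fg_of_surjective (f := f.subgroupComap Δ) fun ⟨g, hg⟩ => ?_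
  obtain ⟨h, rfl⟩ := hΓR (hle hg)
  exact ⟨⟨h, hg⟩, rfl⟩

end LinearGroups

/-- Every commutative subgroup consisting of semi-simple elements of a finitely generated
linear group is finitely generated (over any field `K`). -/
theorem stmt_12 {K : Type*} [Field K] {n : ℕ} (hn : 1 ≤ n)
    (Γ : Subgroup (GL (Fin n) K)) (hΓ : Group.FG ↥Γ)
    (Δ : Subgroup (GL (Fin n) K)) (hle : Δ ≤ Γ)
    (hcomm : ∀ x ∈ Δ, ∀ y ∈ Δ, x * y = y * x)
    (hss : ∀ g ∈ Δ, IsSemisimpleElt g) :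
    Group.FG ↥Δ :=
  stmt_12_general Γ hΓ Δ hle hcomm fun g hg => (hss g hg).eq_one_of_isNilpotent_sub_one
end
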